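/- arXiv:2504.16876 — 4 statements merged into one kernel-verified Lean document; each statement's English description precedes it below -/
import Mathlib

section
/- Let (x̂, ŷ) be a saddle point of L(x,y) = g(x) + ⟨Kx,y⟩ − h(y), let τ, σ > 0, and let x^{md}, x̄ ∈ X and y^{md} ∈ Y. If u = Prox_{τg}(x^{md} − τK^Tv) and v = Prox_{σh}(y^{md} + σKx̄), then G_{x̂,ŷ}(u, v) + ⟨K(u − x̄), v − ŷ⟩ + ‖u − x^{md}‖²/(2τ) + ‖u − x̂‖²/(2τ) + ‖v − y^{md}‖²/(2σ) + ‖v − ŷ‖²/(2σ) ≤ ‖x^{md} − x̂‖²/(2τ) + ‖y^{md} − ŷ‖²/(2σ). -/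
open scoped RealInnerProductSpace

/-- `z` is the minimizer of `u ↦ h u + ‖u - x‖² / (2τ)`, i.e. `z = Prox_{τh}(x)`. -/
def IsProx {X : Type*} [NormedAddCommGroup X] [InnerProductSpace ℝ X]
    (τ : ℝ) (h : X → ℝ) (x z : X) : Prop :=
  ∀ u : X, h z + ‖z - x‖ ^ 2 / (2 * τ) ≤ h u + ‖u - x‖ ^ 2 / (2 * τ)

/-- `(xh, yh)` is a saddle point of `L(x,y) = g x + ⟪K x, y⟫ - h y`. -/
def IsSaddlePoint {X Y : Type*}
    [NormedAddCommGroup X] [InnerProductSpace ℝ X]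
    [NormedAddCommGroup Y] [InnerProductSpace ℝ Y]
    (g : X → ℝ) (h : Y → ℝ) (K : X →L[ℝ] Y) (xh : X) (yh : Y) : Prop :=
  ∀ x : X, ∀ y : Y,
    g xh + ⟪K xh, y⟫ - h y ≤ g xh + ⟪K xh, yh⟫ - h yh ∧
    g xh + ⟪K xh, yh⟫ - h yh ≤ g x + ⟪K x, yh⟫ - h yh

/-- The primal-dual gap `G_{xh,yh}(x,y)` at a saddle point `(xh, yh)`. -/
noncomputable def pdGap {X Y : Type*}
    [NormedAddCommGroup X] [InnerProductSpace ℝ X] [FiniteDimensional ℝ X]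
    [NormedAddCommGroup Y] [InnerProductSpace ℝ Y] [FiniteDimensional ℝ Y]
    (g : X → ℝ) (h : Y → ℝ) (K : X →L[ℝ] Y) (xh : X) (yh : Y) (x : X) (y : Y) : ℝ :=
  (g x - g xh + ⟪(ContinuousLinearMap.adjoint K) yh, x - xh⟫) +
  (h y - h yh - ⟪K xh, y - yh⟫)

theorem prox_ineq {X : Type*} [NormedAddCommGroup X] [InnerProductSpace ℝ X]
    (g : X → ℝ) (hg : ConvexOn ℝ Set.univ g) (τ : ℝ) (hτ : 0 < τ) (w z p : X)
    (hz : IsProx τ g w z) :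
    2 * τ * (g z - g p) ≤ 2 * ⟪z - w, p - z⟫ := by
  have key : ∀ t : ℝ, 0 < t → t ≤ 1 →
      2 * τ * (g z - g p) ≤ 2 * ⟪z - w, p - z⟫ + t * ‖p - z‖ ^ 2 := by
    intro t ht ht1
    have h1 := hz ((1 - t) • z + t • p)
    have h2 := hg.2 (Set.mem_univ z) (Set.mem_univ p) (by linarith : 0 ≤ 1 - t) ht.le (by ring)
    simp only [smul_eq_mul] at h2
    have e : (1 - t) • z + t • p - w = (z - w) + t • (p - z) := by module
    rw [e, norm_add_sq_real, inner_smul_right, norm_smul, Real.norm_eq_abs, mul_pow, sq_abs] at h1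
    have h3 : t * (g z - g p) ≤ (2 * (t * ⟪z - w, p - z⟫) + t ^ 2 * ‖p - z‖ ^ 2) / (2 * τ) := by
      rw [add_assoc, add_div] at h1
      linarith
    rw [le_div_iff₀ (by positivity)] at h3
    have h4 : t * (2 * τ * (g z - g p)) ≤ t * (2 * ⟪z - w, p - z⟫ + t * ‖p - z‖ ^ 2) := by
      linarith
    exact le_of_mul_le_mul_left h4 ht
  have lim : Filter.Tendsto (fun t : ℝ => 2 * ⟪z - w, p - z⟫ + t * ‖p - z‖ ^ 2)
      (nhdsWithin 0 (Set.Ioi 0)) (nhds (2 * ⟪z - w, p - z⟫)) := by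
    have : Continuous (fun t : ℝ => 2 * ⟪z - w, p - z⟫ + t * ‖p - z‖ ^ 2) := by fun_prop
    have h := this.tendsto 0
    simp only [zero_mul, add_zero] at h
    exact h.mono_left nhdsWithin_le_nhds
  refine ge_of_tendsto lim ?_
  filter_upwards [Ioc_mem_nhdsGT (zero_lt_one' ℝ)] with t ht using key t ht.1 ht.2

theorem prox_three_point {X : Type*} [NormedAddCommGroup X] [InnerProductSpace ℝ X]
    (g : X → ℝ) (hg : ConvexOn ℝ Set.univ g) (τ : ℝ) (hτ : 0 < τ) (m c z p : X)
    (hz : IsProx τ g (m - τ • c) z) :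
    g z - g p + ⟪c, z - p⟫ + ‖z - m‖ ^ 2 / (2 * τ) + ‖z - p‖ ^ 2 / (2 * τ)
      ≤ ‖m - p‖ ^ 2 / (2 * τ) := by
  have h := prox_ineq g hg τ hτ _ z p hz
  have e1 : z - (m - τ • c) = (z - m) + τ • c := by module
  have e2 : p - z = -(z - p) := by module
  have e3 : m - p = (z - p) - (z - m) := by module
  rw [e1, e2, inner_neg_right, inner_add_left, real_inner_smul_left] at h
  rw [e3, norm_sub_sq_real (z - p) (z - m), real_inner_comm (z - m) (z - p)]
  have : g z - g p + ⟪c, z - p⟫ ≤ (-(2 * ⟪z - m, z - p⟫)) / (2 * τ) := by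
    rw [le_div_iff₀ (by positivity)]
    linarith
  rw [add_div, sub_div]
  rw [neg_div] at this
  linarith

/-- One-step estimate (inequality (14) of the paper): if
`u = Prox_{τg}(xmd - τ K^T v)` and `v = Prox_{σh}(ymd + σ K xbar)`, then
`G(u,v) + ⟨K(u - xbar), v - yh⟩ + ‖u - xmd‖²/(2τ) + ‖u - xh‖²/(2τ)
 + ‖v - ymd‖²/(2σ) + ‖v - yh‖²/(2σ) ≤ ‖xmd - xh‖²/(2τ) + ‖ymd - yh‖²/(2σ)`. -/
theorem one_step_gap_estimate
    {X Y : Type*}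
    [NormedAddCommGroup X] [InnerProductSpace ℝ X] [FiniteDimensional ℝ X]
    [NormedAddCommGroup Y] [InnerProductSpace ℝ Y] [FiniteDimensional ℝ Y]
    (g : X → ℝ) (h : Y → ℝ) (K : X →L[ℝ] Y)
    (hg : ConvexOn ℝ Set.univ g) (hgc : Continuous g)
    (hh : ConvexOn ℝ Set.univ h) (hhc : Continuous h)
    (xh : X) (yh : Y) (hsad : IsSaddlePoint g h K xh yh)
    (τ σ : ℝ) (hτ : 0 < τ) (hσ : 0 < σ)
    (xmd xbar : X) (ymd : Y) (u : X) (v : Y)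
    (hu : IsProx τ g (xmd - τ • (ContinuousLinearMap.adjoint K) v) u)
    (hv : IsProx σ h (ymd + σ • K xbar) v) :
    pdGap g h K xh yh u v + ⟪K (u - xbar), v - yh⟫ +
        ‖u - xmd‖ ^ 2 / (2 * τ) + ‖u - xh‖ ^ 2 / (2 * τ) +
        ‖v - ymd‖ ^ 2 / (2 * σ) + ‖v - yh‖ ^ 2 / (2 * σ) ≤
      ‖xmd - xh‖ ^ 2 / (2 * τ) + ‖ymd - yh‖ ^ 2 / (2 * σ) := by
  have h1 := prox_three_point g hg τ hτ xmd _ u xh hu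
  have h2 := prox_three_point h hh σ hσ ymd (-(K xbar)) v yh
    (by rwa [smul_neg, sub_neg_eq_add])
  unfold pdGap
  simp only [ContinuousLinearMap.adjoint_inner_left, map_sub, inner_sub_left, inner_sub_right,
    inner_neg_left] at h1 h2 ⊢
  rw [real_inner_comm (K u) v, real_inner_comm (K xh) v] at h1
  rw [real_inner_comm (K u) yh, real_inner_comm (K xh) yh]
  linarith
end

section
/- (Theorem 3.1, global convergence of NPDA) Let {(x_k, y_k)} be generated by the NPDA iteration and suppose the saddle problem min_x max_y g(x) + ⟨Kx,y⟩ − h(y) admits a saddle point. Then the sequence {(x_k, y_k)} converges to a saddle point (x*, y*) of the problem. -/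
open scoped RealInnerProductSpace

open Filter Topology in
lemma npda_sq_diff {Y : Type*} [NormedAddCommGroup Y] [InnerProductSpace ℝ Y]
    (P Q : ℕ → Y) (M : ℝ) (hP : ∀ n, ‖P n‖ ≤ M) (hQ : ∀ n, ‖Q n‖ ≤ M) (ys : Y)
    (hd : Tendsto (fun n => P n - Q n) atTop (𝓝 0)) :
    Tendsto (fun n => ‖P n - ys‖ ^ 2 - ‖Q n - ys‖ ^ 2) atTop (𝓝 0) := by
  have h1 : Tendsto (fun n => ‖P n - Q n‖ * (2 * (M + ‖ys‖))) atTop (𝓝 0) := by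
    have := (hd.norm).mul_const (2 * (M + ‖ys‖))
    simpa using this
  refine squeeze_zero_norm (fun n => ?_) h1
  have e : ‖P n - ys‖ ^ 2 - ‖Q n - ys‖ ^ 2
      = (‖P n - ys‖ - ‖Q n - ys‖) * (‖P n - ys‖ + ‖Q n - ys‖) := by ring
  rw [e, norm_mul]
  have h2 : ‖‖P n - ys‖ - ‖Q n - ys‖‖ ≤ ‖P n - Q n‖ := by
    have := abs_norm_sub_norm_le (P n - ys) (Q n - ys)
    simpa using this
  have h3 : ‖‖P n - ys‖ + ‖Q n - ys‖‖ ≤ 2 * (M + ‖ys‖) := by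
    rw [Real.norm_of_nonneg (by positivity)]
    have := norm_sub_le (P n) ys
    have := norm_sub_le (Q n) ys
    linarith [hP n, hQ n]
  exact mul_le_mul h2 h3 (norm_nonneg _) (norm_nonneg _)

open Filter Topology in
lemma npda_cluster {X Y : Type*}
    [NormedAddCommGroup X] [InnerProductSpace ℝ X] [FiniteDimensional ℝ X]
    [NormedAddCommGroup Y] [InnerProductSpace ℝ Y] [FiniteDimensional ℝ Y]
    (u : ℕ → X) (v : ℕ → Y) (M : ℝ) (hu : ∀ n, ‖u n‖ ≤ M) (hv : ∀ n, ‖v n‖ ≤ M)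
    (φ : ℕ → ℕ) :
    ∃ xs ys, ∃ ψ : ℕ → ℕ, StrictMono ψ ∧ Tendsto (fun n => u (φ (ψ n))) atTop (𝓝 xs) ∧
      Tendsto (fun n => v (φ (ψ n))) atTop (𝓝 ys) := by
  have := FiniteDimensional.proper ℝ X
  have := FiniteDimensional.proper ℝ Y
  have hc : IsCompact ((Metric.closedBall (0 : X) M) ×ˢ (Metric.closedBall (0 : Y) M)) :=
    (isCompact_closedBall _ _).prod (isCompact_closedBall _ _)
  obtain ⟨z, -, ψ, hψ, hz⟩ := hc.tendsto_subseq (x := fun n => (u (φ n), v (φ n)))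
    (fun n => by simp [hu, hv])
  refine ⟨z.1, z.2, ψ, hψ, ?_, ?_⟩
  · exact (continuous_fst.tendsto z).comp hz
  · exact (continuous_snd.tendsto z).comp hz

open Filter Topology in
lemma npda_half {X Y : Type*}
    [NormedAddCommGroup X] [InnerProductSpace ℝ X] [FiniteDimensional ℝ X]
    [NormedAddCommGroup Y] [InnerProductSpace ℝ Y] [FiniteDimensional ℝ Y]
    (u U : ℕ → X) (v V : ℕ → Y) (M : ℝ)
    (hu : ∀ n, ‖u n‖ ≤ M) (hv : ∀ n, ‖v n‖ ≤ M) (hVb : ∀ n, ‖V n‖ ≤ M)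
    (S : X → Y → Prop) (N : X → Y → ℝ) (c C α β : ℝ) (hc : 0 < c) (hα : 0 ≤ α)
    (hβ : 0 ≤ β)
    (hN1 : ∀ p s, c * (‖p‖ ^ 2 + ‖s‖ ^ 2) ≤ N p s)
    (hN2 : ∀ p s, N p s ≤ C * (‖p‖ ^ 2 + ‖s‖ ^ 2))
    (ω : ℕ → ℝ) (ω0 : ℝ) (hω : Tendsto ω atTop (𝓝 ω0))
    (hV : ∀ η > 0, ∀ s t, s ≤ t → (∀ k, s ≤ k → k < t → η < ‖v k - V k‖) →
      ‖V t - V s‖ ≤ (ω s - ω t) / η)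
    (hW : ∀ xs ys, S xs ys → ∃ l, Tendsto (fun k => N (u k - xs) (v k - ys)
      + α * ‖U k - xs‖ ^ 2 + β * ‖V k - ys‖ ^ 2) atTop (𝓝 l))
    (hcl : ∀ xs ys (φ : ℕ → ℕ), StrictMono φ → Tendsto (fun n => u (φ n)) atTop (𝓝 xs) →
      Tendsto (fun n => v (φ n)) atTop (𝓝 ys) → S xs ys)
    (η : ℝ) (hη : 0 < η) (hPx : ∃ᶠ k in atTop, ‖u k - U k‖ ≤ η) :
    ∃ xs ys, S xs ys ∧ ∀ᶠ k in atTop, c * (‖u k - xs‖ ^ 2 + ‖v k - ys‖ ^ 2)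
      ≤ (4 * (α + 1) + β * (2 + 8 * (α + 1) / c) + 1) * η ^ 2 := by
  obtain ⟨φ₀, hφ₀, hφη⟩ := extraction_of_frequently_atTop hPx
  obtain ⟨xs, ys, ψ, hψ, hux, hvy⟩ := npda_cluster u v M hu hv φ₀
  set φ : ℕ → ℕ := fun n => φ₀ (ψ n) with hφd
  have hφ : StrictMono φ := hφ₀.comp hψ
  have hφt : Tendsto φ atTop atTop := hφ.tendsto_atTop
  have hS : S xs ys := hcl xs ys φ hφ hux hvy
  obtain ⟨l, hl⟩ := hW xs ys hS
  have hη2 : 0 < η ^ 2 := by positivity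
  -- the key transfer
  have key : ∀ t : ℕ → ℕ, (∀ n, φ n ≤ t n) →
      (∀ᶠ n in atTop, ∀ k, φ n ≤ k → k < t n → η < ‖v k - V k‖) →
      ∀ᶠ n in atTop, N (u (t n) - xs) (v (t n) - ys) + α * ‖U (t n) - xs‖ ^ 2
        ≤ 4 * (α + 1) * η ^ 2 := by
    intro t ht hsep
    have htt : Tendsto t atTop atTop := tendsto_atTop_mono ht hφt
    have hVd : Tendsto (fun n => V (t n) - V (φ n)) atTop (𝓝 0) := by
      have h0 : Tendsto (fun n => (ω (φ n) - ω (t n)) / η) atTop (𝓝 0) := by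
        have := ((hω.comp hφt).sub (hω.comp htt)).div_const η
        simpa using this
      refine squeeze_zero_norm' ?_ h0
      filter_upwards [hsep] with n hn
      exact hV η hη _ _ (ht n) hn
    have h1 := npda_sq_diff (fun n => V (t n)) (fun n => V (φ n)) M (fun n => hVb _)
      (fun n => hVb _) ys hVd
    have h2 := ((hl.comp htt).sub (hl.comp hφt)).sub (h1.const_mul β)
    have h3 : Tendsto (fun n => C * (‖u (φ n) - xs‖ ^ 2 + ‖v (φ n) - ys‖ ^ 2)) atTop (𝓝 0) := by
      have := ((((hux.sub_const xs).norm).pow 2).add (((hvy.sub_const ys).norm).pow 2)).const_mul C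
      simpa using this
    have h4 : Tendsto (fun n => ‖u (φ n) - xs‖) atTop (𝓝 0) := by
      have := (hux.sub_const xs).norm
      simpa using this
    simp only [sub_self, mul_zero] at h2
    filter_upwards [h2.eventually (gt_mem_nhds hη2), h3.eventually (gt_mem_nhds hη2),
      h4.eventually (gt_mem_nhds (show (0 : ℝ) < η / 4 by positivity))] with n e2 e3 e4
    simp only [Function.comp] at e2
    have e5 := hN2 (u (φ n) - xs) (v (φ n) - ys)
    have e6 : ‖U (φ n) - xs‖ ≤ 5 / 4 * η := by
      have : U (φ n) - xs = (u (φ n) - xs) - (u (φ n) - U (φ n)) := by abel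
      rw [this]
      have := norm_sub_le (u (φ n) - xs) (u (φ n) - U (φ n))
      have := hφη (ψ n)
      simp only [hφd] at *
      linarith
    have e7 : ‖U (φ n) - xs‖ ^ 2 ≤ 2 * η ^ 2 := by
      nlinarith [norm_nonneg (U (φ n) - xs)]
    have e8 := mul_le_mul_of_nonneg_left e7 hα
    nlinarith
  refine ⟨xs, ys, hS, ?_⟩
  by_cases hPy : ∃ᶠ k in atTop, ‖v k - V k‖ ≤ η
  · have hex : ∀ n, ∃ t, φ n ≤ t ∧ ‖v t - V t‖ ≤ η ∧
        ∀ k, φ n ≤ k → k < t → η < ‖v k - V k‖ := by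
      intro n
      have h0 : ∃ t, φ n ≤ t ∧ ‖v t - V t‖ ≤ η := by
        obtain ⟨t, h1, h2⟩ := (frequently_atTop.1 hPy) (φ n)
        exact ⟨t, h1, h2⟩
      classical
      refine ⟨Nat.find h0, (Nat.find_spec h0).1, (Nat.find_spec h0).2, ?_⟩
      intro k hk1 hk2
      have := Nat.find_min h0 hk2
      by_contra hcon
      exact this ⟨hk1, not_lt.1 hcon⟩
    choose t ht1 ht2 ht3 using hex
    have hk := key t ht1 (Eventually.of_forall ht3)
    have htt : Tendsto t atTop atTop := tendsto_atTop_mono ht1 hφt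
    have hle : l ≤ (4 * (α + 1) + β * (2 + 8 * (α + 1) / c)) * η ^ 2 := by
      refine le_of_tendsto (hl.comp htt) ?_
      filter_upwards [hk] with n hn
      simp only [Function.comp]
      have e1 := hN1 (u (t n) - xs) (v (t n) - ys)
      have e2 : ‖v (t n) - ys‖ ^ 2 ≤ 4 * (α + 1) * η ^ 2 / c := by
        rw [le_div_iff₀ hc]
        have := mul_nonneg hα (sq_nonneg ‖U (t n) - xs‖)
        nlinarith [sq_nonneg ‖u (t n) - xs‖]
      have e3 : ‖V (t n) - ys‖ ≤ ‖v (t n) - ys‖ + η := by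
        have : V (t n) - ys = (v (t n) - ys) - (v (t n) - V (t n)) := by abel
        rw [this]
        have := norm_sub_le (v (t n) - ys) (v (t n) - V (t n))
        linarith [ht2 n]
      have e4 : ‖V (t n) - ys‖ ^ 2 ≤ 2 * ‖v (t n) - ys‖ ^ 2 + 2 * η ^ 2 := by
        nlinarith [norm_nonneg (V (t n) - ys), sq_nonneg (‖v (t n) - ys‖ - η)]
      have e5 : ‖V (t n) - ys‖ ^ 2 ≤ (2 + 8 * (α + 1) / c) * η ^ 2 := by
        have : (2 + 8 * (α + 1) / c) * η ^ 2 = 2 * (4 * (α + 1) * η ^ 2 / c) + 2 * η ^ 2 := by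
          ring
        linarith
      have e6 := mul_le_mul_of_nonneg_left e5 hβ
      nlinarith
    filter_upwards [hl.eventually (gt_mem_nhds (show l <
      (4 * (α + 1) + β * (2 + 8 * (α + 1) / c) + 1) * η ^ 2 by nlinarith))] with k hk
    have e1 := hN1 (u k - xs) (v k - ys)
    have := mul_nonneg hα (sq_nonneg ‖U k - xs‖)
    have := mul_nonneg hβ (sq_nonneg ‖V k - ys‖)
    linarith
  · have hPy' : ∀ᶠ k in atTop, η < ‖v k - V k‖ := by
      simpa [Filter.Frequently] using hPy
    obtain ⟨k0, hk0⟩ := eventually_atTop.1 hPy'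
    have hmain : ∀ᶠ k in atTop, N (u k - xs) (v k - ys) + α * ‖U k - xs‖ ^ 2
        ≤ 4 * (α + 1) * η ^ 2 := by
      by_contra hcon
      have hcon' : ∃ᶠ k in atTop, ¬ (N (u k - xs) (v k - ys) + α * ‖U k - xs‖ ^ 2
        ≤ 4 * (α + 1) * η ^ 2) := not_eventually.1 hcon
      have hex : ∀ n, ∃ t, φ n ≤ t ∧ ¬ (N (u t - xs) (v t - ys) + α * ‖U t - xs‖ ^ 2
        ≤ 4 * (α + 1) * η ^ 2) := fun n => by
        obtain ⟨t, h1, h2⟩ := (frequently_atTop.1 hcon') (φ n)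
        exact ⟨t, h1, h2⟩
      choose t ht1 ht2 using hex
      have hk := key t ht1 (by
        filter_upwards [hφt.eventually_ge_atTop k0] with n hn k hk _
        exact hk0 k (le_trans hn hk))
      obtain ⟨n, hn⟩ := hk.exists
      exact ht2 n hn
    filter_upwards [hmain] with k hk
    have e1 := hN1 (u k - xs) (v k - ys)
    have := mul_nonneg hα (sq_nonneg ‖U k - xs‖)
    have : 0 ≤ β * (2 + 8 * (α + 1) / c) * η ^ 2 := by positivity
    nlinarith

open Filter Topology in
lemma npda_abstract {X Y : Type*}
    [NormedAddCommGroup X] [InnerProductSpace ℝ X] [FiniteDimensional ℝ X]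
    [NormedAddCommGroup Y] [InnerProductSpace ℝ Y] [FiniteDimensional ℝ Y]
    (u U : ℕ → X) (v V : ℕ → Y) (M : ℝ)
    (hu : ∀ n, ‖u n‖ ≤ M) (hv : ∀ n, ‖v n‖ ≤ M)
    (hUb : ∀ n, ‖U n‖ ≤ M) (hVb : ∀ n, ‖V n‖ ≤ M)
    (S : X → Y → Prop) (N : X → Y → ℝ) (c C α β : ℝ) (hc : 0 < c) (hα : 0 ≤ α)
    (hβ : 0 ≤ β)
    (hN1 : ∀ p s, c * (‖p‖ ^ 2 + ‖s‖ ^ 2) ≤ N p s)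
    (hN2 : ∀ p s, N p s ≤ C * (‖p‖ ^ 2 + ‖s‖ ^ 2))
    (ω : ℕ → ℝ) (ω0 : ℝ) (hω : Tendsto ω atTop (𝓝 ω0))
    (hU : ∀ η > 0, ∀ s t, s ≤ t → (∀ k, s ≤ k → k < t → η < ‖u k - U k‖) →
      ‖U t - U s‖ ≤ (ω s - ω t) / η)
    (hV : ∀ η > 0, ∀ s t, s ≤ t → (∀ k, s ≤ k → k < t → η < ‖v k - V k‖) →
      ‖V t - V s‖ ≤ (ω s - ω t) / η)
    (hW : ∀ xs ys, S xs ys → ∃ l, Tendsto (fun k => N (u k - xs) (v k - ys)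
      + α * ‖U k - xs‖ ^ 2 + β * ‖V k - ys‖ ^ 2) atTop (𝓝 l))
    (hcl : ∀ xs ys (φ : ℕ → ℕ), StrictMono φ → Tendsto (fun n => u (φ n)) atTop (𝓝 xs) →
      Tendsto (fun n => v (φ n)) atTop (𝓝 ys) → S xs ys) :
    ∃ xs ys, S xs ys ∧ Tendsto u atTop (𝓝 xs) ∧ Tendsto v atTop (𝓝 ys) := by
  have main : ∃ D > 0, ∀ η > 0, ∃ xs ys, ∀ᶠ k in atTop,
      c * (‖u k - xs‖ ^ 2 + ‖v k - ys‖ ^ 2) ≤ D * η ^ 2 := by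
    set D1 := 4 * (α + 1) + β * (2 + 8 * (α + 1) / c) + 1 with hD1
    set D2 := 4 * (β + 1) + α * (2 + 8 * (β + 1) / c) + 1 with hD2
    have hD1p : 0 < D1 := by positivity
    have hD2p : 0 < D2 := by positivity
    refine ⟨D1 + D2 + 1, by positivity, fun η hη => ?_⟩
    have hη2 : 0 < η ^ 2 := by positivity
    by_cases hPx : ∃ᶠ k in atTop, ‖u k - U k‖ ≤ η
    · obtain ⟨xs, ys, -, h⟩ := npda_half u U v V M hu hv hVb S N c C α β hc hα hβ hN1 hN2 ω ω0 hω
        hV hW hcl η hη hPx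
      refine ⟨xs, ys, ?_⟩
      filter_upwards [h] with k hk
      nlinarith
    by_cases hPy : ∃ᶠ k in atTop, ‖v k - V k‖ ≤ η
    · obtain ⟨ys, xs, -, h⟩ := npda_half v V u U M hv hu hUb (fun y x => S x y) (fun s p => N p s)
        c C β α hc hβ hα
        (fun p s => by have := hN1 s p; rwa [add_comm] at this)
        (fun p s => by have := hN2 s p; rwa [add_comm] at this) ω ω0 hω
        hU (fun ys xs hS => by
          obtain ⟨l, hl⟩ := hW xs ys hS
          refine ⟨l, hl.congr fun k => by ring⟩)
        (fun ys xs φ h1 h2 h3 => hcl xs ys φ h1 h3 h2) η hη hPy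
      refine ⟨xs, ys, ?_⟩
      filter_upwards [h] with k hk
      nlinarith
    have hPx' : ∀ᶠ k in atTop, η < ‖u k - U k‖ := by
      simpa [Filter.Frequently] using hPx
    have hPy' : ∀ᶠ k in atTop, η < ‖v k - V k‖ := by
      simpa [Filter.Frequently] using hPy
    obtain ⟨k0, hk0⟩ := eventually_atTop.1 (hPx'.and hPy')
    obtain ⟨xs, ys, φ, hφ, hux, hvy⟩ := npda_cluster u v M hu hv id
    simp only [id] at hux hvy
    have hφt : Tendsto φ atTop atTop := hφ.tendsto_atTop
    obtain ⟨l, hl⟩ := hW xs ys (hcl xs ys φ hφ hux hvy)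
    refine ⟨xs, ys, ?_⟩
    have hmain : ∀ᶠ k in atTop, N (u k - xs) (v k - ys) ≤ 2 * (D1 + D2 + 1) * η ^ 2 / 2 := by
      by_contra hcon
      have hex : ∀ n, ∃ t, φ n ≤ t ∧ ¬ (N (u t - xs) (v t - ys)
        ≤ 2 * (D1 + D2 + 1) * η ^ 2 / 2) := fun n => by
        obtain ⟨t, h1, h2⟩ := (frequently_atTop.1 (not_eventually.1 hcon)) (φ n)
        exact ⟨t, h1, h2⟩
      choose t ht1 ht2 using hex
      have htt : Tendsto t atTop atTop := tendsto_atTop_mono ht1 hφt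
      have h0 : Tendsto (fun n => (ω (φ n) - ω (t n)) / η) atTop (𝓝 0) := by
        have := ((hω.comp hφt).sub (hω.comp htt)).div_const η
        simpa using this
      have hVd : Tendsto (fun n => V (t n) - V (φ n)) atTop (𝓝 0) := by
        refine squeeze_zero_norm' ?_ h0
        filter_upwards [hφt.eventually_ge_atTop k0] with n hn
        exact hV η hη _ _ (ht1 n) (fun k hk _ => (hk0 k (le_trans hn hk)).2)
      have hUd : Tendsto (fun n => U (t n) - U (φ n)) atTop (𝓝 0) := by
        refine squeeze_zero_norm' ?_ h0
        filter_upwards [hφt.eventually_ge_atTop k0] with n hn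
        exact hU η hη _ _ (ht1 n) (fun k hk _ => (hk0 k (le_trans hn hk)).1)
      have h1 := npda_sq_diff (fun n => V (t n)) (fun n => V (φ n)) M (fun n => hVb _)
        (fun n => hVb _) ys hVd
      have h1' := npda_sq_diff (fun n => U (t n)) (fun n => U (φ n)) M (fun n => hUb _)
        (fun n => hUb _) xs hUd
      have h2 := (((hl.comp htt).sub (hl.comp hφt)).sub (h1.const_mul β)).sub (h1'.const_mul α)
      have h3 : Tendsto (fun n => C * (‖u (φ n) - xs‖ ^ 2 + ‖v (φ n) - ys‖ ^ 2)) atTop (𝓝 0) := by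
        have := ((((hux.sub_const xs).norm).pow 2).add
          (((hvy.sub_const ys).norm).pow 2)).const_mul C
        simpa using this
      simp only [sub_self, mul_zero] at h2
      have hp : 0 < (D1 + D2 + 1) * η ^ 2 / 2 := by positivity
      obtain ⟨n, e2, e3⟩ := ((h2.eventually (gt_mem_nhds hp)).and
        (h3.eventually (gt_mem_nhds hp))).exists
      simp only [Function.comp] at e2
      have e5 := hN2 (u (φ n) - xs) (v (φ n) - ys)
      apply ht2 n
      linarith
    filter_upwards [hmain] with k hk
    have e1 := hN1 (u k - xs) (v k - ys)
    linarith
  obtain ⟨D, hD, main⟩ := main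
  have hnear : ∀ ε > 0, ∃ xs ys, ∀ᶠ k in atTop, ‖u k - xs‖ ≤ ε ∧ ‖v k - ys‖ ≤ ε := by
    intro ε hε
    obtain ⟨xs, ys, h⟩ := main (Real.sqrt (c / D) * ε) (by positivity)
    refine ⟨xs, ys, ?_⟩
    filter_upwards [h] with k hk
    have e : D * (Real.sqrt (c / D) * ε) ^ 2 = c * ε ^ 2 := by
      rw [mul_pow, Real.sq_sqrt (by positivity)]
      field_simp
    rw [e] at hk
    have hk' := le_of_mul_le_mul_left hk hc
    constructor
    · exact abs_le_of_sq_le_sq' (by nlinarith [sq_nonneg ‖v k - ys‖]) hε.le |>.2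
    · exact abs_le_of_sq_le_sq' (by nlinarith [sq_nonneg ‖u k - xs‖]) hε.le |>.2
  have := FiniteDimensional.complete ℝ X
  have := FiniteDimensional.complete ℝ Y
  have cu : CauchySeq u := by
    rw [Metric.cauchySeq_iff']
    intro ε hε
    obtain ⟨xs, ys, h⟩ := hnear (ε / 3) (by positivity)
    obtain ⟨k0, hk0⟩ := eventually_atTop.1 h
    refine ⟨k0, fun n hn => ?_⟩
    have h1 := (hk0 n hn).1
    have h2 := (hk0 k0 le_rfl).1
    rw [← dist_eq_norm] at h1 h2
    have := dist_triangle_right (u n) (u k0) xs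
    linarith
  have cv : CauchySeq v := by
    rw [Metric.cauchySeq_iff']
    intro ε hε
    obtain ⟨xs, ys, h⟩ := hnear (ε / 3) (by positivity)
    obtain ⟨k0, hk0⟩ := eventually_atTop.1 h
    refine ⟨k0, fun n hn => ?_⟩
    have h1 := (hk0 n hn).2
    have h2 := (hk0 k0 le_rfl).2
    rw [← dist_eq_norm] at h1 h2
    have := dist_triangle_right (v n) (v k0) ys
    linarith
  obtain ⟨xs, hxs⟩ := cauchySeq_tendsto_of_complete cu
  obtain ⟨ys, hys⟩ := cauchySeq_tendsto_of_complete cv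
  exact ⟨xs, ys, hcl xs ys id strictMono_id hxs hys, hxs, hys⟩

open Filter Topology in
lemma npda_prox {X : Type*} [NormedAddCommGroup X] [InnerProductSpace ℝ X]
    (τ : ℝ) (hτ : 0 < τ) (g : X → ℝ) (hg : ConvexOn ℝ Set.univ g) (w z : X)
    (hz : IsProx τ g w z) (x : X) : g z + ⟪w - z, x - z⟫ / τ ≤ g x := by
  have h1 : ∀ t : ℝ, 0 < t → t ≤ 1 →
      g z + ⟪w - z, x - z⟫ / τ - g x ≤ t * (‖x - z‖ ^ 2 / (2 * τ)) := by
    intro t ht ht1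
    have e1 := hz (z + t • (x - z))
    have e2 := hg.2 (Set.mem_univ z) (Set.mem_univ x) (sub_nonneg.2 ht1) ht.le (by ring)
    have e3 : (1 - t) • z + t • x = z + t • (x - z) := by module
    rw [e3] at e2
    have e4 : z + t • (x - z) - w = (z - w) + t • (x - z) := by abel
    have e5 : ‖(z - w) + t • (x - z)‖ ^ 2
        = ‖z - w‖ ^ 2 - 2 * (t * ⟪w - z, x - z⟫) + t ^ 2 * ‖x - z‖ ^ 2 := by
      rw [norm_add_sq_real, inner_smul_right, norm_smul, mul_pow, Real.norm_eq_abs, sq_abs,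
        ← neg_sub w z, inner_neg_left]
      ring
    rw [e4, e5] at e1
    simp only [smul_eq_mul] at e2
    have e6 : (‖z - w‖ ^ 2 - 2 * (t * ⟪w - z, x - z⟫) + t ^ 2 * ‖x - z‖ ^ 2) / (2 * τ)
        = ‖z - w‖ ^ 2 / (2 * τ) - t * (⟪w - z, x - z⟫ / τ) + t * (t * (‖x - z‖ ^ 2 / (2 * τ))) := by
      field_simp
    rw [e6] at e1
    refine le_of_mul_le_mul_left ?_ ht
    linarith
  have h2 : Tendsto (fun t : ℝ => t * (‖x - z‖ ^ 2 / (2 * τ))) (𝓝[>] 0) (𝓝 0) := by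
    have : Tendsto (fun t : ℝ => t * (‖x - z‖ ^ 2 / (2 * τ))) (𝓝 0) (𝓝 (0 * _)) :=
      tendsto_id.mul_const _
    rw [zero_mul] at this
    exact this.mono_left nhdsWithin_le_nhds
  have h3 : g z + ⟪w - z, x - z⟫ / τ - g x ≤ 0 := by
    refine ge_of_tendsto h2 ?_
    filter_upwards [Ioc_mem_nhdsGT (zero_lt_one (α := ℝ))] with t ht
    exact h1 t ht.1 ht.2
  linarith

lemma npda_xstep {X : Type*} [NormedAddCommGroup X] [InnerProductSpace ℝ X]
    (a : ℝ) (ha : 0 ≤ a) (u u' U U' xs : X) (hU : U' = (1 - a) • U + a • u) :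
    2 * ⟪((1 - a) • u + a • U') - u', u' - xs⟫ ≤
      (‖u - xs‖ ^ 2 + (1 - a) * ‖U - xs‖ ^ 2)
      - (‖u' - xs‖ ^ 2 + (1 - a) * ‖U' - xs‖ ^ 2 + (1 - a) * ‖u' - u‖ ^ 2
        + a * (1 - a) * ‖u - U‖ ^ 2) := by
  obtain ⟨p, hp⟩ : ∃ p, p = u - xs := ⟨_, rfl⟩
  obtain ⟨q, hq⟩ : ∃ q, q = U - xs := ⟨_, rfl⟩
  obtain ⟨r, hr⟩ : ∃ r, r = u' - xs := ⟨_, rfl⟩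
  have e1 : ((1 - a) • u + a • U') - u' = p - (a * (1 - a)) • (p - q) - r := by
    rw [hU, hp, hq, hr]; module
  have e2 : U' - xs = (1 - a) • q + a • p := by rw [hU, hp, hq]; module
  have e3 : u' - u = r - p := by rw [hr, hp]; abel
  have e4 : u - U = p - q := by rw [hp, hq]; abel
  rw [e1, e2, e3, e4, ← hp, ← hq, ← hr]
  have key : 0 ≤ a * ‖r - p - (1 - a) • (q - p)‖ ^ 2 := by positivity
  simp only [← real_inner_self_eq_norm_sq, inner_sub_left, inner_sub_right, inner_add_left,
    inner_add_right, real_inner_smul_left, real_inner_smul_right] at key ⊢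
  rw [real_inner_comm p q, real_inner_comm p r, real_inner_comm q r] at *
  nlinarith

lemma npda_onestep {X Y : Type*}
    [NormedAddCommGroup X] [InnerProductSpace ℝ X] [FiniteDimensional ℝ X]
    [NormedAddCommGroup Y] [InnerProductSpace ℝ Y] [FiniteDimensional ℝ Y]
    (g : X → ℝ) (h : Y → ℝ) (K : X →L[ℝ] Y)
    (hg : ConvexOn ℝ Set.univ g) (hh : ConvexOn ℝ Set.univ h)
    (a b τ σ : ℝ) (ha : 0 ≤ a) (hb : 0 ≤ b) (hτ : 0 < τ) (hσ : 0 < σ)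
    (u u' U U' xs : X) (v v' V V' ys : Y)
    (hU : U' = (1 - a) • U + a • u) (hV : V' = (1 - b) • V + b • v)
    (hx : IsProx τ g (((1 - a) • u + a • U') - τ • (ContinuousLinearMap.adjoint K) v) u')
    (hy : IsProx σ h (((1 - b) • v + b • V') + σ • K ((2 : ℝ) • u' - u)) v')
    (hS : IsSaddlePoint g h K xs ys) :
    (‖u' - xs‖ ^ 2 + (1 - a) * ‖U' - xs‖ ^ 2 + (1 - a) * ‖u' - u‖ ^ 2
        + a * (1 - a) * ‖u - U‖ ^ 2) / τ
      + (‖v' - ys‖ ^ 2 + (1 - b) * ‖V' - ys‖ ^ 2 + (1 - b) * ‖v' - v‖ ^ 2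
        + b * (1 - b) * ‖v - V‖ ^ 2) / σ
      - 2 * ⟪K (u' - xs), v' - ys⟫ - 2 * ⟪K (u' - u), v' - v⟫
    ≤ (‖u - xs‖ ^ 2 + (1 - a) * ‖U - xs‖ ^ 2) / τ
      + (‖v - ys‖ ^ 2 + (1 - b) * ‖V - ys‖ ^ 2) / σ - 2 * ⟪K (u - xs), v - ys⟫ := by
  have x1 := npda_prox τ hτ g hg _ _ hx xs
  have y1 := npda_prox σ hσ h hh _ _ hy ys
  have x2 := div_le_div_of_nonneg_right (npda_xstep a ha u u' U U' xs hU) hτ.le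
  have y2 := div_le_div_of_nonneg_right (npda_xstep b hb v v' V V' ys hV) hσ.le
  obtain ⟨s1, s2⟩ := hS u' v'
  obtain ⟨m, hm⟩ : ∃ m, m = (1 - a) • u + a • U' := ⟨_, rfl⟩
  obtain ⟨n, hn⟩ : ∃ n, n = (1 - b) • v + b • V' := ⟨_, rfl⟩
  rw [← hm] at x1 x2
  rw [← hn] at y1 y2
  have x3 : ⟪m - τ • (ContinuousLinearMap.adjoint K) v - u', xs - u'⟫ / τ
      = - (⟪m - u', u' - xs⟫ / τ) + ⟪K (u' - xs), v⟫ := by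
    have : m - τ • (ContinuousLinearMap.adjoint K) v - u'
      = (m - u') - τ • (ContinuousLinearMap.adjoint K) v := by abel
    rw [this, ← neg_sub u' xs, inner_neg_right, inner_sub_left, real_inner_smul_left,
      ContinuousLinearMap.adjoint_inner_left, real_inner_comm v]
    field_simp
    ring
  have y3 : ⟪n + σ • K ((2 : ℝ) • u' - u) - v', ys - v'⟫ / σ
      = - (⟪n - v', v' - ys⟫ / σ) - ⟪K ((2 : ℝ) • u' - u), v' - ys⟫ := by
    have : n + σ • K ((2 : ℝ) • u' - u) - v'
      = (n - v') + σ • K ((2 : ℝ) • u' - u) := by abel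
    rw [this, ← neg_sub v' ys, inner_neg_right, inner_add_left, real_inner_smul_left]
    field_simp
    ring
  rw [x3] at x1
  rw [y3] at y1
  rw [sub_div, mul_div_assoc] at x2 y2
  simp only [map_sub, map_smul, inner_sub_left, inner_sub_right, real_inner_smul_left] at *
  linarith

lemma npda_cross {X Y : Type*}
    [NormedAddCommGroup X] [InnerProductSpace ℝ X]
    [NormedAddCommGroup Y] [InnerProductSpace ℝ Y]
    (K : X →L[ℝ] Y) (τ σ : ℝ) (hτ : 0 < τ) (hσ : 0 < σ) (p : X) (s : Y) :
    |2 * ⟪K p, s⟫| ≤ (Real.sqrt (σ * τ) * ‖K‖) * (‖p‖ ^ 2 / τ + ‖s‖ ^ 2 / σ) := by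
  have h1 : |⟪K p, s⟫| ≤ ‖K‖ * ‖p‖ * ‖s‖ :=
    (abs_real_inner_le_norm _ _).trans
      (mul_le_mul_of_nonneg_right (K.le_opNorm p) (norm_nonneg _))
  rw [abs_mul, abs_two]
  obtain ⟨t, ht, rfl⟩ : ∃ t, 0 < t ∧ t ^ 2 = τ := ⟨Real.sqrt τ, by positivity, Real.sq_sqrt hτ.le⟩
  obtain ⟨r, hr, rfl⟩ : ∃ r, 0 < r ∧ r ^ 2 = σ := ⟨Real.sqrt σ, by positivity, Real.sq_sqrt hσ.le⟩
  have e : Real.sqrt (r ^ 2 * t ^ 2) = r * t := by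
    rw [← mul_pow, Real.sqrt_sq (by positivity)]
  rw [e]
  have h2 : 2 * (‖p‖ * ‖s‖) ≤ r * t * (‖p‖ ^ 2 / t ^ 2 + ‖s‖ ^ 2 / r ^ 2) := by
    have : r * t * (‖p‖ ^ 2 / t ^ 2 + ‖s‖ ^ 2 / r ^ 2) - 2 * (‖p‖ * ‖s‖)
        = (r * ‖p‖ - t * ‖s‖) ^ 2 / (r * t) := by
      field_simp
      ring
    have h3 : 0 ≤ (r * ‖p‖ - t * ‖s‖) ^ 2 / (r * t) := by positivity
    linarith
  have := mul_le_mul_of_nonneg_left h2 (norm_nonneg K)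
  nlinarith

open Filter Topology in
lemma npda_pathlen {X : Type*} [NormedAddCommGroup X] [InnerProductSpace ℝ X]
    (u U : ℕ → X) (A : ℕ → ℝ) (hA : ∀ k, 0 ≤ A k)
    (hU : ∀ k, U (k + 1) = (1 - A k) • U k + A k • u k) (ω : ℕ → ℝ)
    (hω : ∀ k, A k * ‖u k - U k‖ ^ 2 ≤ ω k - ω (k + 1)) :
    ∀ η > 0, ∀ s t, s ≤ t → (∀ k, s ≤ k → k < t → η < ‖u k - U k‖) →
      ‖U t - U s‖ ≤ (ω s - ω t) / η := by
  intro η hη s t hst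
  induction t, hst using Nat.le_induction with
  | base => intro _; simp
  | succ t hst ih =>
    intro hsep
    have i1 := ih (fun k h1 h2 => hsep k h1 (by omega))
    have i2 := hsep t hst (by omega)
    have e1 : U (t + 1) - U s = (U t - U s) + A t • (u t - U t) := by rw [hU]; module
    have e2 : ‖A t • (u t - U t)‖ ≤ (ω t - ω (t + 1)) / η := by
      rw [norm_smul, Real.norm_of_nonneg (hA t), le_div_iff₀ hη]
      have := hω t
      have := mul_le_mul_of_nonneg_left i2.le (mul_nonneg (hA t) (norm_nonneg (u t - U t)))
      nlinarith
    rw [e1]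
    calc _ ≤ _ := norm_add_le _ _
      _ ≤ (ω s - ω t) / η + (ω t - ω (t + 1)) / η := add_le_add i1 e2
      _ = _ := by ring

open Filter Topology in
lemma npda_md {X : Type*} [NormedAddCommGroup X] [InnerProductSpace ℝ X]
    (u U : ℕ → X) (A : ℕ → ℝ) (hA : ∀ k, A k ∈ Set.Ioo (0 : ℝ) 1)
    (hU : ∀ k, U (k + 1) = (1 - A k) • U k + A k • u k)
    (hd : Tendsto (fun k => ‖u (k + 1) - u k‖ ^ 2) atTop (𝓝 0))
    (hm : Tendsto (fun k => A k * ‖u k - U k‖ ^ 2) atTop (𝓝 0)) :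
    Tendsto (fun k => u (k + 1) - u k) atTop (𝓝 0) ∧
    Tendsto (fun k => ((1 - A k) • u k + A k • U (k + 1)) - u (k + 1)) atTop (𝓝 0) := by
  have h1 : Tendsto (fun k => u (k + 1) - u k) atTop (𝓝 0) := by
    rw [tendsto_zero_iff_norm_tendsto_zero]
    have := hd.sqrt
    simpa using this
  refine ⟨h1, ?_⟩
  have h2 : Tendsto (fun k => (A k * (1 - A k)) • (U k - u k)) atTop (𝓝 0) := by
    have h3 := hm.sqrt
    rw [Real.sqrt_zero] at h3
    refine squeeze_zero_norm (fun k => ?_) h3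
    apply Real.le_sqrt_of_sq_le
    obtain ⟨p, q⟩ := hA k
    rw [norm_smul, mul_pow, Real.norm_eq_abs, sq_abs, norm_sub_rev]
    refine mul_le_mul_of_nonneg_right ?_ (by positivity)
    have e1 : A k * (1 - A k) ≤ A k := by nlinarith
    have e2 : 0 ≤ A k * (1 - A k) := by nlinarith
    nlinarith
  have := h2.sub h1
  rw [sub_zero] at this
  refine this.congr fun k => ?_
  rw [hU]; module

set_option maxHeartbeats 4000000 in
open Filter Topology in
lemma npda_core
    {X Y : Type*}
    [NormedAddCommGroup X] [InnerProductSpace ℝ X] [FiniteDimensional ℝ X]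
    [NormedAddCommGroup Y] [InnerProductSpace ℝ Y] [FiniteDimensional ℝ Y]
    (g : X → ℝ) (h : Y → ℝ) (K : X →L[ℝ] Y)
    (hg : ConvexOn ℝ Set.univ g) (hgc : Continuous g)
    (hh : ConvexOn ℝ Set.univ h) (hhc : Continuous h)
    (a b : ℕ → ℝ) (ha : ∀ k, a k ∈ Set.Ioo (0 : ℝ) 1) (hb : ∀ k, b k ∈ Set.Ioo (0 : ℝ) 1)
    (haanti : Antitone a) (hbanti : Antitone b)
    (τ σ : ℝ) (hτ : 0 < τ) (hσ : 0 < σ)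
    (hstepa : Real.sqrt (σ * τ) * ‖K‖ < 1 - a 0)
    (hstepb : Real.sqrt (σ * τ) * ‖K‖ < 1 - b 0)
    (u U : ℕ → X) (v V : ℕ → Y)
    (hU : ∀ k, U (k + 1) = (1 - a (k + 1)) • U k + a (k + 1) • u k)
    (hV : ∀ k, V (k + 1) = (1 - b (k + 1)) • V k + b (k + 1) • v k)
    (hx : ∀ k, IsProx τ g (((1 - a (k + 1)) • u k + a (k + 1) • U (k + 1))
      - τ • (ContinuousLinearMap.adjoint K) (v k)) (u (k + 1)))
    (hy : ∀ k, IsProx σ h (((1 - b (k + 1)) • v k + b (k + 1) • V (k + 1))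
      + σ • K ((2 : ℝ) • u (k + 1) - u k)) (v (k + 1)))
    (hexists : ∃ xh : X, ∃ yh : Y, IsSaddlePoint g h K xh yh) :
    ∃ xs : X, ∃ ys : Y, IsSaddlePoint g h K xs ys ∧
      Tendsto u atTop (𝓝 xs) ∧ Tendsto v atTop (𝓝 ys) := by
  set κ := Real.sqrt (σ * τ) * ‖K‖ with hκ
  have hκ0 : 0 ≤ κ := by positivity
  obtain ⟨δ, hδ, hδa, hδb⟩ : ∃ δ > 0, κ + δ ≤ 1 - a 0 ∧ κ + δ ≤ 1 - b 0 :=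
    ⟨min (1 - a 0 - κ) (1 - b 0 - κ), lt_min (by linarith) (by linarith),
      by linarith [min_le_left (1 - a 0 - κ) (1 - b 0 - κ)],
      by linarith [min_le_right (1 - a 0 - κ) (1 - b 0 - κ)]⟩
  have hδ1 : κ + δ ≤ 1 := by linarith [(ha 0).1]
  have hcross := fun p s => npda_cross K τ σ hτ hσ p s
  rw [← hκ] at hcross
  let N : X → Y → ℝ := fun p s => ‖p‖ ^ 2 / τ + ‖s‖ ^ 2 / σ - 2 * ⟪K p, s⟫
  have hNl : ∀ p s, δ * (‖p‖ ^ 2 / τ + ‖s‖ ^ 2 / σ) ≤ N p s := by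
    intro p s
    have h1 := (abs_le.1 (hcross p s)).2
    have h2 : 0 ≤ ‖p‖ ^ 2 / τ + ‖s‖ ^ 2 / σ := by positivity
    simp only [N]
    nlinarith
  have hNu : ∀ p s, N p s ≤ 2 * (‖p‖ ^ 2 / τ + ‖s‖ ^ 2 / σ) := by
    intro p s
    have h1 := (abs_le.1 (hcross p s)).1
    have h2 : 0 ≤ ‖p‖ ^ 2 / τ + ‖s‖ ^ 2 / σ := by positivity
    simp only [N]
    nlinarith
  have hN0 : ∀ p s, 0 ≤ N p s := fun p s => le_trans (by positivity) (hNl p s)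
  -- coefficients
  let e : ℕ → ℝ := fun k => (1 - a k)⁻¹
  let d : ℕ → ℝ := fun k => (1 - b k)⁻¹
  have ha' : ∀ k, 0 < 1 - a k := fun k => by linarith [(ha k).2]
  have hb' : ∀ k, 0 < 1 - b k := fun k => by linarith [(hb k).2]
  have he1 : ∀ k, 1 ≤ e k := fun k => (one_le_inv₀ (ha' k)).2 (by linarith [(ha k).1])
  have hd1 : ∀ k, 1 ≤ d k := fun k => (one_le_inv₀ (hb' k)).2 (by linarith [(hb k).1])
  have hea : ∀ k, e k * (1 - a k) = 1 := fun k => inv_mul_cancel₀ (ha' k).ne'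
  have hdb : ∀ k, d k * (1 - b k) = 1 := fun k => inv_mul_cancel₀ (hb' k).ne'
  have hem : ∀ k, e (k + 1) ≤ e k := fun k =>
    inv_anti₀ (ha' k) (by linarith [haanti (Nat.le_succ k)])
  have hdm : ∀ k, d (k + 1) ≤ d k := fun k =>
    inv_anti₀ (hb' k) (by linarith [hbanti (Nat.le_succ k)])
  let W : X → Y → ℕ → ℝ := fun xs ys k => d k * e k * N (u k - xs) (v k - ys)
    + d k * (‖U k - xs‖ ^ 2 / τ) + e k * (‖V k - ys‖ ^ 2 / σ)
  let R : ℕ → ℝ := fun k => δ * (‖u (k + 1) - u k‖ ^ 2 / τ + ‖v (k + 1) - v k‖ ^ 2 / σ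
    + a (k + 1) * ‖u k - U k‖ ^ 2 / τ + b (k + 1) * ‖v k - V k‖ ^ 2 / σ)
  have hR0 : ∀ k, 0 ≤ R k := fun k => by
    have := (ha (k + 1)).1
    have := (hb (k + 1)).1
    simp only [R]; positivity
  have hstep : ∀ xs ys, IsSaddlePoint g h K xs ys → ∀ k, R k ≤ W xs ys k - W xs ys (k + 1) := by
    intro xs ys hS k
    have h1 := npda_onestep g h K hg hh (a (k + 1)) (b (k + 1)) τ σ (ha _).1.le (hb _).1.le hτ hσ
      (u k) (u (k + 1)) (U k) (U (k + 1)) xs (v k) (v (k + 1)) (V k) (V (k + 1)) ys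
      (hU k) (hV k) (hx k) (hy k) hS
    have h2 : N (u (k + 1) - xs) (v (k + 1) - ys)
        + (1 - a (k + 1)) * (‖U (k + 1) - xs‖ ^ 2 / τ)
        + (1 - b (k + 1)) * (‖V (k + 1) - ys‖ ^ 2 / σ) + R k
        ≤ N (u k - xs) (v k - ys) + (1 - a (k + 1)) * (‖U k - xs‖ ^ 2 / τ)
        + (1 - b (k + 1)) * (‖V k - ys‖ ^ 2 / σ) := by
      have c1 := (abs_le.1 (hcross (u (k + 1) - u k) (v (k + 1) - v k))).2
      have a1 : κ + δ ≤ 1 - a (k + 1) := by linarith [haanti (Nat.zero_le (k + 1))]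
      have b1 : κ + δ ≤ 1 - b (k + 1) := by linarith [hbanti (Nat.zero_le (k + 1))]
      have p1 : 0 ≤ ‖u (k + 1) - u k‖ ^ 2 / τ := by positivity
      have p2 : 0 ≤ ‖v (k + 1) - v k‖ ^ 2 / σ := by positivity
      have p3 : 0 ≤ a (k + 1) * ‖u k - U k‖ ^ 2 / τ := by
        have := (ha (k + 1)).1
        positivity
      have p4 : 0 ≤ b (k + 1) * ‖v k - V k‖ ^ 2 / σ := by
        have := (hb (k + 1)).1
        positivity
      have q1 := mul_le_mul_of_nonneg_right a1 p1
      have q2 := mul_le_mul_of_nonneg_right b1 p2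
      have q3 := mul_le_mul_of_nonneg_right (show δ ≤ 1 - a (k + 1) by linarith) p3
      have q4 := mul_le_mul_of_nonneg_right (show δ ≤ 1 - b (k + 1) by linarith) p4
      simp only [N, R]
      ring_nf at h1 c1 q1 q2 q3 q4 ⊢
      linarith
    have hc : 0 ≤ d (k + 1) * e (k + 1) := by
      have := hd1 (k + 1)
      have := he1 (k + 1)
      positivity
    have hc1 : 1 ≤ d (k + 1) * e (k + 1) := by
      have := hd1 (k + 1)
      have := he1 (k + 1)
      nlinarith
    have h3 := mul_le_mul_of_nonneg_left h2 hc
    have i1 : d (k + 1) * e (k + 1) * (1 - a (k + 1)) = d (k + 1) := by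
      rw [mul_assoc, hea, mul_one]
    have i2 : d (k + 1) * e (k + 1) * (1 - b (k + 1)) = e (k + 1) := by
      rw [mul_right_comm, hdb, one_mul]
    simp only [mul_add, ← mul_assoc, i1, i2] at h3
    have j1 : d (k + 1) * e (k + 1) * N (u k - xs) (v k - ys)
        ≤ d k * e k * N (u k - xs) (v k - ys) := by
      refine mul_le_mul_of_nonneg_right ?_ (hN0 _ _)
      exact mul_le_mul (hdm k) (hem k) (by linarith [he1 (k + 1)]) (by linarith [hd1 k])
    have j2 := mul_le_mul_of_nonneg_right (hdm k) (show 0 ≤ ‖U k - xs‖ ^ 2 / τ by positivity)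
    have j3 := mul_le_mul_of_nonneg_right (hem k) (show 0 ≤ ‖V k - ys‖ ^ 2 / σ by positivity)
    have j4 := mul_le_mul_of_nonneg_right hc1 (hR0 k)
    simp only [W]
    linarith
  have hW0 : ∀ xs ys k, 0 ≤ W xs ys k := by
    intro xs ys k
    have := hN0 (u k - xs) (v k - ys)
    have := hd1 k
    have := he1 k
    simp only [W]
    positivity
  have hWanti : ∀ xs ys, IsSaddlePoint g h K xs ys → Antitone (W xs ys) := fun xs ys hS =>
    antitone_nat_of_succ_le fun k => by linarith [hstep xs ys hS k, hR0 k]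
  have hWlim : ∀ xs ys, IsSaddlePoint g h K xs ys → ∃ l, Tendsto (W xs ys) atTop (𝓝 l) :=
    fun xs ys hS => ⟨_, tendsto_atTop_ciInf (hWanti xs ys hS)
      ⟨0, by rintro _ ⟨k, rfl⟩; exact hW0 xs ys k⟩⟩
  obtain ⟨x0, y0, hS0⟩ := hexists
  obtain ⟨l0, hl0⟩ := hWlim x0 y0 hS0
  have hRlim : Tendsto R atTop (𝓝 0) := by
    have h1 := hl0.sub (hl0.comp (tendsto_add_atTop_nat 1))
    rw [sub_self] at h1
    exact squeeze_zero hR0 (fun k => hstep x0 y0 hS0 k) h1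
  -- boundedness
  have hbd : ∃ M, (∀ n, ‖u n‖ ≤ M) ∧ (∀ n, ‖v n‖ ≤ M) ∧ (∀ n, ‖U n‖ ≤ M) ∧
      (∀ n, ‖V n‖ ≤ M) := by
    set w := W x0 y0 0 with hw
    have hw0 : 0 ≤ w := hW0 _ _ _
    have hle : ∀ k, δ * (‖u k - x0‖ ^ 2 / τ) ≤ w ∧ δ * (‖v k - y0‖ ^ 2 / σ) ≤ w ∧
        δ * (‖U k - x0‖ ^ 2 / τ) ≤ w ∧ δ * (‖V k - y0‖ ^ 2 / σ) ≤ w := by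
      intro k
      have h1 : W x0 y0 k ≤ w := hWanti x0 y0 hS0 (Nat.zero_le k)
      have h2 := hNl (u k - x0) (v k - y0)
      have h3 : N (u k - x0) (v k - y0) ≤ d k * e k * N (u k - x0) (v k - y0) :=
        le_mul_of_one_le_left (hN0 _ _) (by nlinarith [hd1 k, he1 k])
      have p1 : 0 ≤ ‖u k - x0‖ ^ 2 / τ := by positivity
      have p2 : 0 ≤ ‖v k - y0‖ ^ 2 / σ := by positivity
      have p3 : 0 ≤ ‖U k - x0‖ ^ 2 / τ := by positivity
      have p4 : 0 ≤ ‖V k - y0‖ ^ 2 / σ := by positivity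
      have h4 := mul_le_mul_of_nonneg_right (show δ ≤ d k by linarith [hd1 k]) p3
      have h5 := mul_le_mul_of_nonneg_right (show δ ≤ e k by linarith [he1 k]) p4
      have q1 := mul_nonneg hδ.le p1
      have q2 := mul_nonneg hδ.le p2
      have q3 := mul_nonneg hδ.le p3
      have q4 := mul_nonneg hδ.le p4
      simp only [W] at h1
      refine ⟨?_, ?_, ?_, ?_⟩ <;> linarith
    have gen : ∀ {Z : Type _} [NormedAddCommGroup Z] (z z0 : Z) (r : ℝ), 0 < r →
        δ * (‖z - z0‖ ^ 2 / r) ≤ w → ‖z‖ ≤ ‖z0‖ + Real.sqrt (w * r / δ) := by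
      intro Z _ z z0 r hr hz
      have h1 : ‖z - z0‖ ≤ Real.sqrt (w * r / δ) := by
        apply Real.le_sqrt_of_sq_le
        rw [le_div_iff₀ hδ]
        rw [← mul_div_assoc, div_le_iff₀ hr] at hz
        linarith
      have := norm_le_norm_add_norm_sub' z z0
      linarith
    have gen2 : ∀ {Z : Type _} [NormedAddCommGroup Z] (z z0 : Z) (r : ℝ), 0 < r →
        δ * (‖z - z0‖ ^ 2 / r) ≤ w → ‖z‖ ≤ ‖z0‖ + Real.sqrt (w * r / δ) := by
      intro Z _ z z0 r hr hz
      have h1 : ‖z - z0‖ ≤ Real.sqrt (w * r / δ) := by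
        apply Real.le_sqrt_of_sq_le
        rw [le_div_iff₀ hδ]
        rw [← mul_div_assoc, div_le_iff₀ hr] at hz
        linarith
      have := norm_le_norm_add_norm_sub' z z0
      linarith
    have hMx : ‖x0‖ + Real.sqrt (w * τ / δ) ≤ max (‖x0‖ + Real.sqrt (w * τ / δ))
      (‖y0‖ + Real.sqrt (w * σ / δ)) := le_max_left _ _
    have hMy : ‖y0‖ + Real.sqrt (w * σ / δ) ≤ max (‖x0‖ + Real.sqrt (w * τ / δ))
      (‖y0‖ + Real.sqrt (w * σ / δ)) := le_max_right _ _
    exact ⟨_, fun n => (gen _ _ _ hτ (hle n).1).trans hMx,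
      fun n => (gen2 _ _ _ hσ (hle n).2.1).trans hMy,
      fun n => (gen _ _ _ hτ (hle n).2.2.1).trans hMx,
      fun n => (gen2 _ _ _ hσ (hle n).2.2.2).trans hMy⟩
  obtain ⟨M, hub, hvb, hUb, hVb⟩ := hbd
  -- limits of residuals
  have hparts : ∀ k, ‖u (k + 1) - u k‖ ^ 2 ≤ τ / δ * R k ∧ ‖v (k + 1) - v k‖ ^ 2 ≤ σ / δ * R k ∧
      a (k + 1) * ‖u k - U k‖ ^ 2 ≤ τ / δ * R k ∧ b (k + 1) * ‖v k - V k‖ ^ 2 ≤ σ / δ * R k := by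
    intro k
    have p1 : 0 ≤ ‖u (k + 1) - u k‖ ^ 2 / τ := by positivity
    have p2 : 0 ≤ ‖v (k + 1) - v k‖ ^ 2 / σ := by positivity
    have p3 : 0 ≤ a (k + 1) * ‖u k - U k‖ ^ 2 / τ := by
      have := (ha (k + 1)).1
      positivity
    have p4 : 0 ≤ b (k + 1) * ‖v k - V k‖ ^ 2 / σ := by
      have := (hb (k + 1)).1
      positivity
    have hRk : R k / δ = ‖u (k + 1) - u k‖ ^ 2 / τ + ‖v (k + 1) - v k‖ ^ 2 / σ
      + a (k + 1) * ‖u k - U k‖ ^ 2 / τ + b (k + 1) * ‖v k - V k‖ ^ 2 / σ := by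
      simp only [R]; field_simp
    have r1 : τ / δ * R k = R k / δ * τ := by ring
    have r2 : σ / δ * R k = R k / δ * σ := by ring
    rw [r1, r2]
    refine ⟨?_, ?_, ?_, ?_⟩
    · rw [← div_le_iff₀ hτ]; linarith
    · rw [← div_le_iff₀ hσ]; linarith
    · rw [← div_le_iff₀ hτ]; linarith
    · rw [← div_le_iff₀ hσ]; linarith
  have hRτ : Tendsto (fun k => τ / δ * R k) atTop (𝓝 0) := by
    simpa using hRlim.const_mul (τ / δ)
  have hRσ : Tendsto (fun k => σ / δ * R k) atTop (𝓝 0) := by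
    simpa using hRlim.const_mul (σ / δ)
  obtain ⟨hdu, hmu⟩ := npda_md u U (fun k => a (k + 1)) (fun k => ha _) hU
    (squeeze_zero (fun k => by positivity) (fun k => (hparts k).1) hRτ)
    (squeeze_zero (fun k => by have := (ha (k + 1)).1; positivity)
      (fun k => (hparts k).2.2.1) hRτ)
  obtain ⟨hdv, hmv⟩ := npda_md v V (fun k => b (k + 1)) (fun k => hb _) hV
    (squeeze_zero (fun k => by positivity) (fun k => (hparts k).2.1) hRσ)
    (squeeze_zero (fun k => by have := (hb (k + 1)).1; positivity)
      (fun k => (hparts k).2.2.2) hRσ)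
  -- cluster points are saddle points
  have hcl : ∀ xs ys (φ : ℕ → ℕ), StrictMono φ → Tendsto (fun n => u (φ n)) atTop (𝓝 xs) →
      Tendsto (fun n => v (φ n)) atTop (𝓝 ys) → IsSaddlePoint g h K xs ys := by
    intro xs ys φ hφ hux hvy
    have hφt := hφ.tendsto_atTop
    have hux' : Tendsto (fun n => u (φ n + 1)) atTop (𝓝 xs) := by
      have := (hdu.comp hφt).add hux
      rw [zero_add] at this
      exact this.congr fun n => by simp
    have hvy' : Tendsto (fun n => v (φ n + 1)) atTop (𝓝 ys) := by
      have := (hdv.comp hφt).add hvy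
      rw [zero_add] at this
      exact this.congr fun n => by simp
    have hgx : ∀ x, g xs - ⟪K (x - xs), ys⟫ ≤ g x := by
      intro x
      have h1 : ∀ n, g (u (φ n + 1)) + ⟪((1 - a (φ n + 1)) • u (φ n)
          + a (φ n + 1) • U (φ n + 1)) - u (φ n + 1), x - u (φ n + 1)⟫ / τ
          - ⟪K (x - u (φ n + 1)), v (φ n)⟫ ≤ g x := by
        intro n
        have h2 := npda_prox τ hτ g hg _ _ (hx (φ n)) x
        rw [sub_right_comm, inner_sub_left, real_inner_smul_left,
          ContinuousLinearMap.adjoint_inner_left, sub_div, mul_div_cancel_left₀ _ hτ.ne',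
          real_inner_comm] at h2
        rw [real_inner_comm] at h2
        rw [real_inner_comm (v (φ n))]
        linarith
      have h2 := (((hgc.tendsto xs).comp hux').add
        (((hmu.comp hφt).inner (hux'.const_sub x)).div_const τ)).sub
        (((K.continuous.tendsto _).comp (hux'.const_sub x)).inner hvy)
      rw [inner_zero_left, zero_div, add_zero] at h2
      exact le_of_tendsto' h2 h1
    have hhy : ∀ y, h ys + ⟪K xs, y - ys⟫ ≤ h y := by
      intro y
      have h1 : ∀ n, h (v (φ n + 1)) + ⟪((1 - b (φ n + 1)) • v (φ n)
          + b (φ n + 1) • V (φ n + 1)) - v (φ n + 1), y - v (φ n + 1)⟫ / σ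
          + ⟪K ((2 : ℝ) • u (φ n + 1) - u (φ n)), y - v (φ n + 1)⟫ ≤ h y := by
        intro n
        have h2 := npda_prox σ hσ h hh _ _ (hy (φ n)) y
        rw [add_sub_right_comm, inner_add_left, real_inner_smul_left, add_div,
          mul_div_cancel_left₀ _ hσ.ne'] at h2
        linarith
      have h2 := (((hhc.tendsto ys).comp hvy').add
        (((hmv.comp hφt).inner (hvy'.const_sub y)).div_const σ)).add
        (((K.continuous.tendsto _).comp ((hux'.const_smul (2 : ℝ)).sub hux)).inner
          (hvy'.const_sub y))
      rw [inner_zero_left, zero_div, add_zero, two_smul, add_sub_cancel_right] at h2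
      exact le_of_tendsto' h2 h1
    intro x y
    have h1 := hgx x
    have h2 := hhy y
    simp only [map_sub, inner_sub_left, inner_sub_right] at h1 h2
    constructor <;> linarith
  -- limits of coefficients
  have hlimc : ∀ f : ℕ → ℝ, (∀ k, f (k + 1) ≤ f k) → (∀ k, 1 ≤ f k) →
      ∃ l, 1 ≤ l ∧ Tendsto f atTop (𝓝 l) := by
    intro f h1 h2
    have := tendsto_atTop_ciInf (antitone_nat_of_succ_le h1)
      ⟨1, by rintro _ ⟨k, rfl⟩; exact h2 k⟩
    exact ⟨_, ge_of_tendsto' this h2, this⟩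
  obtain ⟨e0, he0, het⟩ := hlimc e hem he1
  obtain ⟨d0, hd0, hdt⟩ := hlimc d hdm hd1
  have he0p : 0 < e0 := by linarith
  have hd0p : 0 < d0 := by linarith
  have hzb : ∀ (f q : ℕ → ℝ) (l B : ℝ), Tendsto f atTop (𝓝 l) → (∀ k, 0 ≤ q k) →
      (∀ k, q k ≤ B) → Tendsto (fun k => (f k - l) * q k) atTop (𝓝 0) := by
    intro f q l B hf h0 h1
    have h2 : Tendsto (fun k => ‖f k - l‖ * B) atTop (𝓝 0) := by
      have := ((hf.sub_const l).norm).mul_const B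
      simpa using this
    refine squeeze_zero_norm (fun k => ?_) h2
    rw [norm_mul, Real.norm_of_nonneg (h0 k)]
    exact mul_le_mul_of_nonneg_left (h1 k) (norm_nonneg _)
  have hsqx : ∀ (z : ℕ → X) (z0 : X), (∀ k, ‖z k‖ ≤ M) → ∀ k, ‖z k - z0‖ ^ 2 ≤ (M + ‖z0‖) ^ 2 := by
    intro z z0 hz k
    have := norm_sub_le (z k) z0
    exact pow_le_pow_left₀ (norm_nonneg _) (by linarith [hz k]) 2
  have hsqy : ∀ (z : ℕ → Y) (z0 : Y), (∀ k, ‖z k‖ ≤ M) → ∀ k, ‖z k - z0‖ ^ 2 ≤ (M + ‖z0‖) ^ 2 := by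
    intro z z0 hz k
    have := norm_sub_le (z k) z0
    exact pow_le_pow_left₀ (norm_nonneg _) (by linarith [hz k]) 2
  have hω : ∀ k, (τ + σ) / δ * R k ≤ (τ + σ) / δ * W x0 y0 k - (τ + σ) / δ * W x0 y0 (k + 1) := by
    intro k
    rw [← mul_sub]
    exact mul_le_mul_of_nonneg_left (hstep x0 y0 hS0 k) (by positivity)
  have hsplit : ∀ k, (τ + σ) / δ * R k = τ / δ * R k + σ / δ * R k := fun k => by ring
  have hpτ : ∀ k, 0 ≤ τ / δ * R k := fun k => mul_nonneg (by positivity) (hR0 k)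
  have hpσ : ∀ k, 0 ≤ σ / δ * R k := fun k => mul_nonneg (by positivity) (hR0 k)
  refine npda_abstract u U v V M hub hvb hUb hVb (IsSaddlePoint g h K)
    (fun p s => d0 * e0 * N p s) (d0 * e0 * (δ * min τ⁻¹ σ⁻¹)) (d0 * e0 * (2 * (τ⁻¹ + σ⁻¹)))
    (d0 / τ) (e0 / σ) ?_ (by positivity) (by positivity) ?_ ?_
    (fun k => (τ + σ) / δ * W x0 y0 k) _ (hl0.const_mul _) ?_ ?_ ?_ hcl
  · have : 0 < min τ⁻¹ σ⁻¹ := lt_min (by positivity) (by positivity)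
    positivity
  · intro p s
    rw [mul_assoc]
    refine mul_le_mul_of_nonneg_left (le_trans ?_ (hNl p s)) (by positivity)
    rw [mul_assoc]
    refine mul_le_mul_of_nonneg_left ?_ hδ.le
    have h1 := mul_le_mul_of_nonneg_left (min_le_left τ⁻¹ σ⁻¹) (sq_nonneg ‖p‖)
    have h2 := mul_le_mul_of_nonneg_left (min_le_right τ⁻¹ σ⁻¹) (sq_nonneg ‖s‖)
    rw [div_eq_mul_inv, div_eq_mul_inv]
    linarith
  · intro p s
    rw [mul_assoc (d0 * e0)]
    refine mul_le_mul_of_nonneg_left (le_trans (hNu p s) ?_) (by positivity)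
    have h1 : 0 ≤ ‖p‖ ^ 2 * σ⁻¹ := by positivity
    have h2 : 0 ≤ ‖s‖ ^ 2 * τ⁻¹ := by positivity
    rw [div_eq_mul_inv, div_eq_mul_inv]
    linarith
  · refine npda_pathlen u U (fun k => a (k + 1)) (fun k => (ha _).1.le) hU _ (fun k => ?_)
    have := (hparts k).2.2.1
    linarith [hω k, hsplit k, hpσ k]
  · refine npda_pathlen v V (fun k => b (k + 1)) (fun k => (hb _).1.le) hV _ (fun k => ?_)
    have := (hparts k).2.2.2
    linarith [hω k, hsplit k, hpτ k]
  · intro xs ys hS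
    obtain ⟨l, hl⟩ := hWlim xs ys hS
    refine ⟨l, ?_⟩
    have h1 := hzb (fun k => d k * e k) (fun k => N (u k - xs) (v k - ys)) (d0 * e0)
      (2 * ((M + ‖xs‖) ^ 2 / τ + (M + ‖ys‖) ^ 2 / σ)) (hdt.mul het) (fun k => hN0 _ _)
      (fun k => (hNu _ _).trans (by
        have := hsqx u xs hub k
        have := hsqy v ys hvb k
        gcongr))
    have h2 := hzb d (fun k => ‖U k - xs‖ ^ 2 / τ) d0 ((M + ‖xs‖) ^ 2 / τ) hdt
      (fun k => by positivity)
      (fun k => div_le_div_of_nonneg_right (hsqx U xs hUb k) hτ.le)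
    have h3 := hzb e (fun k => ‖V k - ys‖ ^ 2 / σ) e0 ((M + ‖ys‖) ^ 2 / σ) het
      (fun k => by positivity)
      (fun k => div_le_div_of_nonneg_right (hsqy V ys hVb k) hσ.le)
    have h4 := ((hl.sub h1).sub h2).sub h3
    simp only [sub_zero] at h4
    refine h4.congr fun k => ?_
    simp only [W]
    ring

/-- **Theorem 3.1 (global convergence of NPDA).** If the saddle problem admits a
saddle point, then the NPDA iterates `(x_k, y_k)` converge to a saddle point. -/
theorem npda_global_convergence
    {X Y : Type*}
    [NormedAddCommGroup X] [InnerProductSpace ℝ X] [FiniteDimensional ℝ X]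
    [NormedAddCommGroup Y] [InnerProductSpace ℝ Y] [FiniteDimensional ℝ Y]
    (g : X → ℝ) (h : Y → ℝ) (K : X →L[ℝ] Y)
    (hg : ConvexOn ℝ Set.univ g) (hgc : Continuous g)
    (hh : ConvexOn ℝ Set.univ h) (hhc : Continuous h)
    -- NPDA parameters
    (a b : ℕ → ℝ) (ha : ∀ k, a k ∈ Set.Ioo (0 : ℝ) 1) (hb : ∀ k, b k ∈ Set.Ioo (0 : ℝ) 1)
    (haanti : Antitone a) (hbanti : Antitone b)
    (τ σ : ℝ) (hτ : 0 < τ) (hσ : 0 < σ)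
    (hstepa : ∀ k, Real.sqrt (σ * τ) * ‖K‖ < 1 - a k)
    (hstepb : ∀ k, Real.sqrt (σ * τ) * ‖K‖ < 1 - b k)
    -- NPDA iterates (with x₋₁ = x₀, y₀ = y₁, y₀^ag = y₁^ag = y₁)
    (x xag xmd xbar : ℕ → X) (y yag ymd : ℕ → Y)
    (hxag0 : xag 0 = x 0) (hy0 : y 0 = y 1) (hyag0 : yag 0 = y 1) (hyag1 : yag 1 = y 1)
    (hxbar0 : xbar 0 = x 0)
    (hxag : ∀ k, xag (k + 1) = (1 - a (k + 1)) • xag k + a (k + 1) • x k)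
    (hxmd : ∀ k, xmd (k + 1) = (1 - a (k + 1)) • x k + a (k + 1) • xag (k + 1))
    (hx : ∀ k, IsProx τ g
      (xmd (k + 1) - τ • (ContinuousLinearMap.adjoint K) (y (k + 1))) (x (k + 1)))
    (hxbar : ∀ k, xbar (k + 1) = (2 : ℝ) • x (k + 1) - x k)
    (hyag : ∀ k, yag (k + 2) = (1 - b (k + 2)) • yag (k + 1) + b (k + 2) • y (k + 1))
    (hymd : ∀ k, ymd (k + 2) = (1 - b (k + 2)) • y (k + 1) + b (k + 2) • yag (k + 2))
    (hy : ∀ k, IsProx σ h (ymd (k + 2) + σ • K (xbar (k + 1))) (y (k + 2)))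
    (hexists : ∃ xh : X, ∃ yh : Y, IsSaddlePoint g h K xh yh) :
    ∃ xs : X, ∃ ys : Y, IsSaddlePoint g h K xs ys ∧
      Filter.Tendsto x Filter.atTop (nhds xs) ∧
      Filter.Tendsto y Filter.atTop (nhds ys) := by
  have hbanti' : Antitone (fun k => b (k + 1)) := fun i j hij => hbanti (by omega)
  obtain ⟨xs, ys, hS, h1, h2⟩ := npda_core g h K hg hgc hh hhc a (fun k => b (k + 1)) ha
    (fun k => hb _) haanti hbanti' τ σ hτ hσ (hstepa 0) (hstepb 1) x xag
    (fun k => y (k + 1)) (fun k => yag (k + 1)) hxag hyag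
    (fun k => by rw [← hxmd]; exact hx k)
    (fun k => by
      have h3 := hy k
      rw [hymd, hxbar] at h3
      exact h3) hexists
  exact ⟨xs, ys, hS, h1, (Filter.tendsto_add_atTop_iff_nat 1).1 h2⟩
end

section
/- (Inequality (l5) of NPDAL) Let g : X → ℝ be convex continuous, K : X → Y continuous linear with adjoint K^T, τ_{k−1} > 0, τ_k > 0, θ_k = τ_k/τ_{k−1}, and suppose x_k = Prox_{τ_{k−1}g}(x_k^{md} − τ_{k−1}K^Ty_k) for some x_k^{md} ∈ X, x_{k−1} ∈ X and y_k ∈ Y. Set x̄_k = x_k + θ_k(x_k − x_{k−1}). Then for every w ∈ X, ⟨θ_k(x_k − x_k^{md}) + τ_kK^Ty_k, w − x̄_k⟩ ≥ τ_k·((1 + θ_k)g(x_k) − g(w) − θ_k g(x_{k−1})). -/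
open scoped RealInnerProductSpace

/-- Variational inequality for the proximal point. -/
lemma IsProx.variational {X : Type*} [NormedAddCommGroup X] [InnerProductSpace ℝ X]
    {τ : ℝ} (hτ : 0 < τ) {g : X → ℝ} (hg : ConvexOn ℝ Set.univ g) {x z : X}
    (h : IsProx τ g x z) (u : X) : τ * (g z - g u) ≤ ⟪z - x, u - z⟫ := by
  have key : ∀ t : ℝ, 0 < t → t ≤ 1 →
      τ * (g z - g u) ≤ ⟪z - x, u - z⟫ + t * (‖u - z‖ ^ 2 / 2) := by
    intro t ht ht1
    have h1 := h ((1 - t) • z + t • u)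
    have h2 := hg.2 (Set.mem_univ z) (Set.mem_univ u) (sub_nonneg.2 ht1) ht.le (by ring)
    have h3 : (1 - t) • z + t • u - x = (z - x) + t • (u - z) := by module
    rw [h3, norm_add_sq_real, inner_smul_right, norm_smul, mul_pow, Real.norm_eq_abs, sq_abs] at h1
    simp only [smul_eq_mul] at h2
    have h4 : g z + ‖z - x‖ ^ 2 / (2 * τ) ≤ (1 - t) * g z + t * g u +
        (‖z - x‖ ^ 2 + 2 * (t * ⟪z - x, u - z⟫) + t ^ 2 * ‖u - z‖ ^ 2) / (2 * τ) := by linarith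
    have h5 := mul_le_mul_of_nonneg_left h4 (by positivity : 0 ≤ 2 * τ)
    rw [mul_add, mul_add, mul_div_cancel₀ _ (by positivity : 2 * τ ≠ 0),
      mul_div_cancel₀ _ (by positivity : 2 * τ ≠ 0)] at h5
    refine le_of_mul_le_mul_left ?_ ht
    nlinarith
  by_contra hc
  push Not at hc
  set D := ‖u - z‖ ^ 2 / 2 with hD
  have hD0 : 0 ≤ D := by positivity
  set e := τ * (g z - g u) - ⟪z - x, u - z⟫ with he
  have he0 : 0 < e := by linarith
  have h1 := key (e / (e + D)) (by positivity) (by rw [div_le_one (by positivity)]; linarith)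
  have h2 : e / (e + D) * D < e := by
    rw [div_mul_eq_mul_div, div_lt_iff₀ (by positivity)]
    nlinarith
  linarith

/-- Inequality (l5) of NPDAL: if `x_k = Prox_{τ_{k-1}g}(x_k^{md} - τ_{k-1}K^T y_k)`,
`θ_k = τ_k/τ_{k-1}` and `x̄_k = x_k + θ_k(x_k - x_{k-1})`, then for all `w`,
`⟨θ_k(x_k - x_k^{md}) + τ_k K^T y_k, w - x̄_k⟩ ≥ τ_k((1 + θ_k)g(x_k) - g(w) - θ_k g(x_{k-1}))`. -/
theorem npdal_extrapolated_prox_inequality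
    {X Y : Type*}
    [NormedAddCommGroup X] [InnerProductSpace ℝ X] [FiniteDimensional ℝ X]
    [NormedAddCommGroup Y] [InnerProductSpace ℝ Y] [FiniteDimensional ℝ Y]
    (g : X → ℝ) (hg : ConvexOn ℝ Set.univ g) (hgc : Continuous g)
    (K : X →L[ℝ] Y)
    (τkm τk : ℝ) (hτkm : 0 < τkm) (hτk : 0 < τk)
    (θk : ℝ) (hθk : θk = τk / τkm)
    (xmd xkm xk : X) (yk : Y)
    (hxk : IsProx τkm g (xmd - τkm • (ContinuousLinearMap.adjoint K) yk) xk)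
    (xbar : X) (hxbar : xbar = xk + θk • (xk - xkm)) :
    ∀ w : X,
      τk * ((1 + θk) * g xk - g w - θk * g xkm) ≤
        ⟪θk • (xk - xmd) + τk • (ContinuousLinearMap.adjoint K) yk, w - xbar⟫ := by
  intro w
  have hθ : 0 < θk := by rw [hθk]; positivity
  have hθτ : θk * τkm = τk := by rw [hθk]; field_simp
  have a := hxk.variational hτkm hg w
  have b := hxk.variational hτkm hg xkm
  set p := (ContinuousLinearMap.adjoint K) yk
  set v := xk - (xmd - τkm • p) with hv
  have e1 : θk • (xk - xmd) + τk • p = θk • v := by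
    rw [hv, ← hθτ]; module
  have e2 : w - xbar = (w - xk) + θk • (xkm - xk) := by
    rw [hxbar]; module
  rw [e1, e2, real_inner_smul_left, inner_add_right, inner_smul_right]
  have b' := mul_le_mul_of_nonneg_left b hθ.le
  have c := mul_le_mul_of_nonneg_left (add_le_add a b') hθ.le
  refine le_trans (le_of_eq ?_) c
  rw [← hθτ]; ring
end

section
/- (Theorem 3.5, global convergence of NPDAL) Let {(x_k, y_k)} be generated by the NPDAL iteration (with stepsizes τ_k accepted by the linesearch, bounded below by some τ > 0 and with θ_k = τ_k/τ_{k−1} ≤ θ for all k), and suppose the saddle problem min_x max_y g(x) + ⟨Kx,y⟩ − h(y) admits a saddle point. Then the sequence {(x_k, y_k)} converges to a saddle point of the problem. -/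
open scoped RealInnerProductSpace

section scalar

/-- monotonicity of clipped averages along a stretch -/
theorem aux_stretch (s t lam : ℕ → ℝ) (h0 : ∀ k, 0 ≤ lam k) (h1 : ∀ k, lam k ≤ 1)
    (hs : ∀ k, s (k + 1) = (1 - lam k) * s k + lam k * t k) (c ε : ℝ)
    (m k : ℕ) (hmk : m ≤ k) (ht : ∀ j, m ≤ j → j < k → |t j - c| ≤ ε) :
    max (s k - c) ε ≤ max (s m - c) ε ∧ min (s m - c) (-ε) ≤ min (s k - c) (-ε) := by
  induction k, hmk using Nat.le_induction with
  | base => exact ⟨le_rfl, le_rfl⟩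
  | succ k hmk ih =>
    obtain ⟨i1, i2⟩ := ih (fun j hj hjk => ht j hj (by omega))
    have hk := abs_le.1 (ht k hmk (by omega))
    have hl0 := h0 k
    have hl1 := h1 k
    constructor
    · refine le_trans (max_le ?_ (le_max_right _ _)) i1
      have e1 : s k - c ≤ max (s k - c) ε := le_max_left _ _
      have e2 : ε ≤ max (s k - c) ε := le_max_right _ _
      rw [hs k]
      nlinarith [mul_le_mul_of_nonneg_left e1 (sub_nonneg.2 hl1),
        mul_le_mul_of_nonneg_left (hk.2.trans e2) hl0]
    · refine le_trans i2 (le_min ?_ (min_le_right _ _))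
      have e1 : min (s k - c) (-ε) ≤ s k - c := min_le_left _ _
      have e2 : min (s k - c) (-ε) ≤ -ε := min_le_right _ _
      rw [hs k]
      nlinarith [mul_le_mul_of_nonneg_left e1 (sub_nonneg.2 hl1),
        mul_le_mul_of_nonneg_left (e2.trans hk.1) hl0]

theorem aux_clip (u v ε η : ℝ) (hε : 0 ≤ ε)
    (h1 : |max u ε - max v ε| ≤ η) (h2 : |min u (-ε) - min v (-ε)| ≤ η) :
    |u - v| ≤ 2 * η + 2 * ε := by
  rw [abs_le] at *
  rcases max_cases u ε with ⟨e1, f1⟩ | ⟨e1, f1⟩ <;> rcases max_cases v ε with ⟨e2, f2⟩ | ⟨e2, f2⟩ <;>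
  rcases min_cases u (-ε) with ⟨e3, f3⟩ | ⟨e3, f3⟩ <;>
  rcases min_cases v (-ε) with ⟨e4, f4⟩ | ⟨e4, f4⟩ <;>
  rw [e1, e2] at h1 <;> rw [e3, e4] at h2 <;> constructor <;> linarith [h1.1, h1.2, h2.1, h2.2]

theorem aux_avg_conv (s t lam : ℕ → ℝ) (h0 : ∀ k, 0 ≤ lam k) (h1 : ∀ k, lam k ≤ 1)
    (hs : ∀ k, s (k + 1) = (1 - lam k) * s k + lam k * t k) (T : ℝ)
    (ht : Filter.Tendsto t Filter.atTop (nhds T)) :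
    ∃ S, Filter.Tendsto s Filter.atTop (nhds S) := by
  apply cauchySeq_tendsto_of_complete
  rw [Metric.cauchySeq_iff']
  intro ε0 hε0
  set ε := ε0 / 8 with hε
  have hεp : 0 < ε := by positivity
  obtain ⟨N, hN⟩ := (Metric.tendsto_atTop.1 ht) ε hεp
  have hst : ∀ m k, N ≤ m → m ≤ k →
      max (s k - T) ε ≤ max (s m - T) ε ∧ min (s m - T) (-ε) ≤ min (s k - T) (-ε) := by
    intro m k hm hk
    exact aux_stretch s t lam h0 h1 hs T ε m k hk
      (fun j hj _ => by have := hN j (by omega); rw [Real.dist_eq] at this; exact this.le)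
  have hA : Antitone (fun k => max (s (N + k) - T) ε) :=
    fun i j hij => (hst (N + i) (N + j) (by omega) (by omega)).1
  have hB : Monotone (fun k => min (s (N + k) - T) (-ε)) :=
    fun i j hij => (hst (N + i) (N + j) (by omega) (by omega)).2
  have hA' := (tendsto_atTop_ciInf hA ⟨ε, by rintro _ ⟨k, rfl⟩; exact le_max_right _ _⟩).cauchySeq
  have hB' := (tendsto_atTop_ciSup hB ⟨-ε, by rintro _ ⟨k, rfl⟩; exact min_le_right _ _⟩).cauchySeq
  obtain ⟨M1, hM1⟩ := Metric.cauchySeq_iff.1 hA' ε hεp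
  obtain ⟨M2, hM2⟩ := Metric.cauchySeq_iff.1 hB' ε hεp
  refine ⟨N + max M1 M2, fun n hn => ?_⟩
  obtain ⟨k, rfl⟩ := Nat.exists_eq_add_of_le (le_trans (Nat.le_add_right N _) hn)
  have hk : max M1 M2 ≤ k := by omega
  have q1 := hM1 k (le_trans (le_max_left _ _) hk) (max M1 M2) (le_max_left _ _)
  have q2 := hM2 k (le_trans (le_max_right _ _) hk) (max M1 M2) (le_max_right _ _)
  rw [Real.dist_eq] at q1 q2 ⊢
  have := aux_clip _ _ ε ε hεp.le q1.le q2.le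
  have e : s (N + k) - T - (s (N + max M1 M2) - T) = s (N + k) - s (N + max M1 M2) := by ring
  rw [e] at this
  linarith

theorem aux_brackets (Good : ℕ → Prop) (hfreq : ∀ M, ∃ m, M ≤ m ∧ Good m) (M : ℕ) :
    ∃ k0, ∀ k, k0 ≤ k → ∃ m n, M ≤ m ∧ m ≤ k ∧ k < n ∧ Good m ∧ Good n ∧
      ∀ j, m < j → j < n → ¬ Good j := by
  classical
  obtain ⟨m0, hm0, hg0⟩ := hfreq M
  refine ⟨m0, fun k hk => ?_⟩
  have hex : ∃ n, k < n ∧ Good n := by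
    obtain ⟨n, hn, hgn⟩ := hfreq (k + 1)
    exact ⟨n, by omega, hgn⟩
  refine ⟨Nat.findGreatest Good k, Nat.find hex, ?_, Nat.findGreatest_le k, (Nat.find_spec hex).1,
    Nat.findGreatest_spec hk hg0, (Nat.find_spec hex).2, ?_⟩
  · exact hm0.trans (Nat.le_findGreatest hk hg0)
  · intro j h1 h2 hj
    by_cases hjk : j ≤ k
    · exact Nat.findGreatest_is_greatest h1 hjk hj
    · exact Nat.find_min hex h2 ⟨by omega, hj⟩

theorem aux_scalar_conv (p s α : ℕ → ℝ) (hα : ∀ k, α k ∈ Set.Ioo (0 : ℝ) 1) (hanti : Antitone α)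
    (hs : ∀ k, s (k + 1) = (1 - α (k + 1)) * s k + α (k + 1) * p k)
    (B : ℝ) (hB : ∀ k, |s k| ≤ B)
    (Good : ℕ → Prop) (hfreq : ∀ M, ∃ m, M ≤ m ∧ Good m) (L : ℝ)
    (hω : ∀ ε > 0, ∃ M, ∀ m, M ≤ m → Good m → |p m + (1 - α (m + 1)) * s m - L| ≤ ε)
    (hp : ∀ ε > 0, ∃ M, ∀ m, M ≤ m → Good m → ∀ k, m ≤ k →
      (∀ j, m < j → j < k → ¬ Good j) → |p k - p m| ≤ ε) :
    ∃ P, Filter.Tendsto p Filter.atTop (nhds P) := by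
  have hαlim := tendsto_atTop_ciInf hanti ⟨0, by rintro _ ⟨k, rfl⟩; exact (hα k).1.le⟩
  set A := ⨅ i, α i with hA
  have hAle : ∀ k, A ≤ α k := fun k => ciInf_le ⟨0, by rintro _ ⟨k, rfl⟩; exact (hα k).1.le⟩ k
  have hA1 : A < 1 := (hAle 0).trans_lt (hα 0).2
  have hA0 : 0 ≤ A := le_ciInf fun k => (hα k).1.le
  have hγ : 0 < 1 - A := by linarith
  have hB0 : 0 ≤ B := (abs_nonneg _).trans (hB 0)
  -- first: the combination tends to `L` along the full sequence
  have key : Filter.Tendsto (fun k => p k + (1 - α (k + 1)) * s k) Filter.atTop (nhds L) := by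
    rw [Metric.tendsto_atTop]
    intro ε0 hε0
    -- tolerance
    obtain ⟨ε, hε, hεε⟩ : ∃ ε > 0, ε * (8 + 10 / (1 - A)) < ε0 := by
      have hc : 0 < 8 + 10 / (1 - A) := by positivity
      refine ⟨ε0 / (2 * (8 + 10 / (1 - A))), by positivity, ?_⟩
      have : ε0 / (2 * (8 + 10 / (1 - A))) * (8 + 10 / (1 - A)) = ε0 / 2 := by
        field_simp
      rw [this]; linarith
    obtain ⟨M1, hM1⟩ := hω ε hε
    obtain ⟨M2, hM2⟩ := hp ε hε
    obtain ⟨M3, hM3⟩ := (Metric.tendsto_atTop.1 hαlim) (ε / (B + 1)) (by positivity)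
    have hM3' : ∀ k, M3 ≤ k → ∀ i, |(1 - α k) * s i - (1 - A) * s i| ≤ ε := by
      intro k hk i
      have h1 := hM3 k hk
      rw [Real.dist_eq] at h1
      have : (1 - α k) * s i - (1 - A) * s i = - ((α k - A) * s i) := by ring
      rw [this, abs_neg, abs_mul]
      calc |α k - A| * |s i| ≤ (ε / (B + 1)) * (B + 1) := by
            apply mul_le_mul h1.le _ (abs_nonneg _) (by positivity)
            linarith [hB i]
        _ = ε := by field_simp
    obtain ⟨k0, hk0⟩ := aux_brackets Good hfreq (max M1 (max M2 M3))
    refine ⟨k0, fun k hk => ?_⟩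
    obtain ⟨m, n, hMm, hmk, hkn, hgm, hgn, hbad⟩ := hk0 k hk
    have m1 : M1 ≤ m := le_trans (le_max_left _ _) hMm
    have m2 : M2 ≤ m := le_trans (le_trans (le_max_left _ _) (le_max_right _ _)) hMm
    have m3 : M3 ≤ m := le_trans (le_trans (le_max_right _ _) (le_max_right _ _)) hMm
    have hpj : ∀ j, m ≤ j → j ≤ n → |p j - p m| ≤ ε := fun j h1 h2 =>
      hM2 m m2 hgm j h1 (fun i hi hij => hbad i hi (by omega))
    have hst1 := aux_stretch s p (fun k => α (k + 1)) (fun k => (hα _).1.le) (fun k => (hα _).2.le)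
      hs (p m) ε m k hmk (fun j h1 h2 => hpj j h1 (by omega))
    have hst2 := aux_stretch s p (fun k => α (k + 1)) (fun k => (hα _).1.le) (fun k => (hα _).2.le)
      hs (p m) ε k n hkn.le (fun j h1 h2 => hpj j (by omega) (by omega))
    have wm := abs_le.1 (hM1 m m1 hgm)
    have wn := abs_le.1 (hM1 n (by omega) hgn)
    have sm := abs_le.1 (hM3' (m + 1) (by omega) m)
    have sn := abs_le.1 (hM3' (n + 1) (by omega) n)
    have sk := abs_le.1 (hM3' (k + 1) (by omega) k)
    have pn := abs_le.1 (hpj n (by omega) le_rfl)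
    have pk := abs_le.1 (hpj k hmk hkn.le)
    have hsmn : |s m - s n| ≤ 5 * ε / (1 - A) := by
      rw [abs_le, ← neg_div, div_le_iff₀ hγ, le_div_iff₀ hγ]
      constructor <;> linarith
    have hη : |(s m - p m) - (s n - p m)| ≤ 5 * ε / (1 - A) := by
      convert hsmn using 2; ring
    have hx := (abs_max_sub_max_le_abs (s m - p m) (s n - p m) ε).trans hη
    have hn := (abs_min_sub_min_le_max (s m - p m) (-ε) (s n - p m) (-ε))
    rw [sub_self, abs_zero, max_eq_left (abs_nonneg _)] at hn
    replace hn := hn.trans hη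
    have hcl := aux_clip (s k - p m) (s m - p m) ε (5 * ε / (1 - A)) hε.le
      (by
        rw [abs_le] at hx ⊢
        constructor <;> linarith [hst1.1, hst2.1, hx.1, hx.2])
      (by
        rw [abs_le] at hn ⊢
        constructor <;> linarith [hst1.2, hst2.2, hn.1, hn.2])
    have e : s k - p m - (s m - p m) = s k - s m := by ring
    rw [e] at hcl
    have hcl' : |(1 - A) * s k - (1 - A) * s m| ≤ 2 * (5 * ε / (1 - A)) + 2 * ε := by
      rw [← mul_sub, abs_mul, abs_of_pos hγ]
      refine le_trans (mul_le_of_le_one_left (abs_nonneg _) (by linarith)) hcl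
    have hcl2 := abs_le.1 hcl'
    have heq : 2 * (5 * ε / (1 - A)) + 2 * ε = ε * (2 + 10 / (1 - A)) := by ring
    rw [heq] at hcl2
    rw [Real.dist_eq, abs_lt]
    constructor <;> nlinarith
  have ht : Filter.Tendsto (fun k => (p k + (1 - α (k + 1)) * s k) / (2 - α (k + 1)))
      Filter.atTop (nhds (L / (2 - A))) :=
    key.div (tendsto_const_nhds.sub ((Filter.tendsto_add_atTop_iff_nat 1).2 hαlim)) (by linarith)
  obtain ⟨S, hS⟩ := aux_avg_conv s _ (fun k => α (k + 1) * (2 - α (k + 1)))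
    (fun k => mul_nonneg (hα _).1.le (by linarith [(hα (k + 1)).2]))
    (fun k => by nlinarith [sq_nonneg (1 - α (k + 1))])
    (fun k => by
      have : (2 - α (k + 1)) ≠ 0 := by linarith [(hα (k + 1)).2]
      rw [hs k]
      field_simp
      ring) _ ht
  refine ⟨L - (1 - A) * S, ?_⟩
  have := key.sub ((tendsto_const_nhds (x := (1 : ℝ)).sub
    ((Filter.tendsto_add_atTop_iff_nat 1).2 hαlim)).mul hS)
  refine this.congr (fun k => by ring)

/-- quasi-Fejér monotone scalar sequences -/
theorem aux_quasi (E R ρ : ℕ → ℝ) (hE : ∀ k, 0 ≤ E k) (hR : ∀ k, 0 ≤ R k) (hρ : ∀ k, 0 ≤ ρ k)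
    (hanti : Antitone ρ) (h : ∀ k, E (k + 1) + R k ≤ (1 + (ρ k - ρ (k + 1))) * E k) :
    (∃ l, Filter.Tendsto E Filter.atTop (nhds l)) ∧ Filter.Tendsto R Filter.atTop (nhds 0) := by
  set F : ℕ → ℝ := fun k => Real.exp (ρ k) * E k with hF
  have hstep : ∀ k, F (k + 1) + R k ≤ F k := by
    intro k
    have h1 : Real.exp (ρ k) = Real.exp (ρ (k + 1)) * Real.exp (ρ k - ρ (k + 1)) := by
      rw [← Real.exp_add]; congr 1; ring
    have h2 := Real.add_one_le_exp (ρ k - ρ (k + 1))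
    have h3 : 1 ≤ Real.exp (ρ (k + 1)) := Real.one_le_exp (hρ _)
    have h4 : E (k + 1) + R k ≤ Real.exp (ρ k - ρ (k + 1)) * E k :=
      (h k).trans (mul_le_mul_of_nonneg_right (by linarith) (hE k))
    have h5 := mul_le_mul_of_nonneg_left h4 (by linarith : 0 ≤ Real.exp (ρ (k + 1)))
    simp only [hF]
    rw [h1]
    nlinarith [hR k]
  have hFanti : Antitone F := antitone_nat_of_succ_le fun k => by linarith [hstep k, hR k]
  have hF0 : ∀ k, 0 ≤ F k := fun k => mul_nonneg (Real.exp_pos _).le (hE k)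
  have hFl := tendsto_atTop_ciInf hFanti ⟨0, by rintro _ ⟨k, rfl⟩; exact hF0 k⟩
  have hρl := tendsto_atTop_ciInf hanti ⟨0, by rintro _ ⟨k, rfl⟩; exact hρ k⟩
  constructor
  · refine ⟨_, ((Real.continuous_exp.tendsto _).comp hρl.neg |>.mul hFl).congr fun k => ?_⟩
    simp only [Function.comp, hF]
    rw [← mul_assoc, ← Real.exp_add]; simp
  · have hd : Filter.Tendsto (fun k => F k - F (k + 1)) Filter.atTop (nhds 0) := by
      have := hFl.sub ((Filter.tendsto_add_atTop_iff_nat 1).2 hFl)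
      simpa using this
    exact squeeze_zero hR (fun k => by linarith [hstep k]) hd

end scalar

section vec
variable {X : Type*} [NormedAddCommGroup X] [InnerProductSpace ℝ X]

theorem aux_prox {τ : ℝ} (hτ : 0 < τ) {h : X → ℝ} (hc : ConvexOn ℝ Set.univ h) {w z : X}
    (hz : IsProx τ h w z) (u : X) : τ * (h z - h u) ≤ ⟪z - w, u - z⟫ := by
  by_contra hcon
  push Not at hcon
  set c := τ * (h z - h u) - ⟪z - w, u - z⟫ with hcdef
  have hcpos : 0 < c := by linarith
  have hall : ∀ t : ℝ, 0 < t → t ≤ 1 → c ≤ t * (‖u - z‖ ^ 2 / 2) := by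
    intro t ht ht1
    have h1 := hz (z + t • (u - z))
    have h2 : h (z + t • (u - z)) ≤ (1 - t) * h z + t * h u := by
      have := hc.2 (Set.mem_univ z) (Set.mem_univ u) (sub_nonneg.2 ht1) ht.le (by ring)
      have e : z + t • (u - z) = (1 - t) • z + t • u := by module
      rw [e]
      simpa using this
    have h3 : ‖z + t • (u - z) - w‖ ^ 2
        = ‖z - w‖ ^ 2 + 2 * t * ⟪z - w, u - z⟫ + t ^ 2 * ‖u - z‖ ^ 2 := by
      have : z + t • (u - z) - w = (z - w) + t • (u - z) := by abel
      rw [this, norm_add_sq_real, real_inner_smul_right, norm_smul, mul_pow, Real.norm_eq_abs,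
        sq_abs]
      ring
    rw [h3] at h1
    have h4 : h z + ‖z - w‖ ^ 2 / (2 * τ) ≤ (1 - t) * h z + t * h u +
      (‖z - w‖ ^ 2 + 2 * t * ⟪z - w, u - z⟫ + t ^ 2 * ‖u - z‖ ^ 2) / (2 * τ) := by linarith
    have h5 := mul_le_mul_of_nonneg_right h4 (by positivity : 0 ≤ 2 * τ)
    rw [add_mul, add_mul, div_mul_cancel₀ _ (by positivity), div_mul_cancel₀ _ (by positivity)] at h5
    have h6 : t * c ≤ t * (t * (‖u - z‖ ^ 2 / 2)) := by
      rw [hcdef]; nlinarith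
    exact le_of_mul_le_mul_left h6 ht
  have hN : 0 ≤ ‖u - z‖ ^ 2 / 2 := by positivity
  have := hall (min 1 (c / (2 * (‖u - z‖ ^ 2 / 2 + 1)))) (by positivity) (min_le_left _ _)
  have h7 : min 1 (c / (2 * (‖u - z‖ ^ 2 / 2 + 1))) * (‖u - z‖ ^ 2 / 2) ≤
      (c / (2 * (‖u - z‖ ^ 2 / 2 + 1))) * (‖u - z‖ ^ 2 / 2 + 1) := by
    apply mul_le_mul (min_le_right _ _) (by linarith) hN (by positivity)
  have h8 : (c / (2 * (‖u - z‖ ^ 2 / 2 + 1))) * (‖u - z‖ ^ 2 / 2 + 1) = c / 2 := by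
    field_simp
  linarith

theorem aux_md (c : ℝ) (z w v p : X) :
    2 * ⟪z - ((1 - c) • w + c • v), p - z⟫ = (1 - c) * ‖w - p‖ ^ 2 + c * ‖v - p‖ ^ 2
      - ‖z - p‖ ^ 2 - (1 - c) * ‖z - w‖ ^ 2 - c * ‖z - v‖ ^ 2 := by
  have e1 : z - ((1 - c) • w + c • v) = (1 - c) • (z - w) + c • (z - v) := by
    module
  have e2 : w - p = -((z - w) + (p - z)) := by abel
  have e3 : v - p = -((z - v) + (p - z)) := by abel
  have e4 : z - p = -(p - z) := by abel
  rw [e1, e2, e3, e4]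
  simp only [norm_neg]
  rw [norm_add_sq_real, norm_add_sq_real, inner_add_left, real_inner_smul_left,
    real_inner_smul_left]
  ring

theorem aux_ag (c : ℝ) (w v p : X) :
    ‖((1 - c) • v + c • w) - p‖ ^ 2 = (1 - c) * ‖v - p‖ ^ 2 + c * ‖w - p‖ ^ 2
      - c * (1 - c) * ‖w - v‖ ^ 2 := by
  have e1 : ((1 - c) • v + c • w) - p = (1 - c) • (v - p) + c • (w - p) := by
    module
  have e2 : w - v = (w - p) - (v - p) := by abel
  rw [e1, e2, norm_add_sq_real, norm_sub_sq_real (w - p) (v - p), norm_smul, norm_smul, mul_pow,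
    mul_pow, Real.norm_eq_abs, Real.norm_eq_abs, sq_abs, sq_abs, real_inner_smul_left,
    real_inner_smul_right, real_inner_comm (v - p) (w - p)]
  ring

theorem aux_extrap (a θ' θ : ℝ) (ha : 0 ≤ a) (hθ0 : 0 ≤ θ') (hθ : θ' ≤ θ) (xm x xp xag xb : X)
    (hxb : xb = x + θ' • (x - xm)) :
    2 * θ' * ⟪x - ((1 - a) • xm + a • xag), xp - xb⟫ ≤
      (1 - a) * (‖xp - x‖ ^ 2 - θ' ^ 2 * ‖x - xm‖ ^ 2 - ‖xp - xb‖ ^ 2)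
      + a * ‖x - xag‖ ^ 2 + a * θ ^ 2 * ‖xp - xb‖ ^ 2 := by
  have e1 : x - ((1 - a) • xm + a • xag) = (1 - a) • (x - xm) + a • (x - xag) := by module
  have e2 : xp - x = (xp - xb) + θ' • (x - xm) := by rw [hxb]; module
  rw [e1, e2, norm_add_sq_real, inner_add_left, real_inner_smul_left,
    real_inner_smul_left, real_inner_smul_right, norm_smul, mul_pow, Real.norm_eq_abs, sq_abs,
    real_inner_comm (xp - xb) (x - xm)]
  have h1 : 2 * θ' * ⟪x - xag, xp - xb⟫ ≤ ‖x - xag‖ ^ 2 + θ ^ 2 * ‖xp - xb‖ ^ 2 := by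
    have i1 := real_inner_le_norm (x - xag) (xp - xb)
    have i2 : θ' ^ 2 ≤ θ ^ 2 := by gcongr
    have i3 := mul_le_mul_of_nonneg_right i2 (sq_nonneg ‖xp - xb‖)
    nlinarith [sq_nonneg (‖x - xag‖ - θ' * ‖xp - xb‖)]
  nlinarith [mul_le_mul_of_nonneg_left h1 ha]

theorem aux_conv_unique [FiniteDimensional ℝ X] (u : ℕ → X) (B : ℝ) (hB : ∀ k, ‖u k‖ ≤ B)
    (huniq : ∀ (φ ψ : ℕ → ℕ) (p q : X), Filter.Tendsto φ Filter.atTop Filter.atTop →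
      Filter.Tendsto ψ Filter.atTop Filter.atTop →
      Filter.Tendsto (fun n => u (φ n)) Filter.atTop (nhds p) →
      Filter.Tendsto (fun n => u (ψ n)) Filter.atTop (nhds q) → p = q) :
    ∃ p, Filter.Tendsto u Filter.atTop (nhds p) := by
  have : ProperSpace X := FiniteDimensional.proper_real X
  have hcl : ∀ v : ℕ → X, (∀ k, ‖v k‖ ≤ B) → ∃ p, ∃ φ : ℕ → ℕ, StrictMono φ ∧
      Filter.Tendsto (v ∘ φ) Filter.atTop (nhds p) := by
    intro v hv
    obtain ⟨p, -, φ, h1, h2⟩ := (isCompact_closedBall (0 : X) B).tendsto_subseq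
      (x := v) (fun k => by simpa using hv k)
    exact ⟨p, φ, h1, h2⟩
  obtain ⟨p, φ, h1, h2⟩ := hcl u hB
  refine ⟨p, Filter.tendsto_of_subseq_tendsto fun ns hns => ?_⟩
  obtain ⟨q, ψ, h3, h4⟩ := hcl (fun k => u (ns k)) (fun k => hB _)
  refine ⟨ψ, ?_⟩
  have := huniq φ (fun n => ns (ψ n)) p q h1.tendsto_atTop (hns.comp h3.tendsto_atTop) h2 h4
  rw [this]
  exact h4

end vec

section step
variable {X Y : Type*}
    [NormedAddCommGroup X] [InnerProductSpace ℝ X] [FiniteDimensional ℝ X]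
    [NormedAddCommGroup Y] [InnerProductSpace ℝ Y] [FiniteDimensional ℝ Y]

/-- primal gap -/
noncomputable def auxP (g : X → ℝ) (K : X →L[ℝ] Y) (xh : X) (yh : Y) (z : X) : ℝ :=
  g z - g xh + ⟪(ContinuousLinearMap.adjoint K) yh, z - xh⟫

theorem auxP_nonneg {g : X → ℝ} {h : Y → ℝ} {K : X →L[ℝ] Y} {xh : X} {yh : Y}
    (hs : IsSaddlePoint g h K xh yh) (z : X) : 0 ≤ auxP g K xh yh z := by
  have h1 := (hs z yh).2
  unfold auxP
  rw [ContinuousLinearMap.adjoint_inner_left, map_sub, inner_sub_right, real_inner_comm,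
    real_inner_comm (K xh) yh]
  linarith

theorem aux_core (g : X → ℝ) (h : Y → ℝ) (K : X →L[ℝ] Y)
    (β δ τm τ θ' : ℝ) (hβ : 0 < β) (hτm : 0 < τm) (hτ : τ = θ' * τm) (hθ' : 0 ≤ θ')
    (hδ : 0 ≤ δ) (xm x xp xb xmdk xmd1 : X) (y yp ymd1 : Y)
    (hxb : xb = x + θ' • (x - xm))
    (hx1 : ∀ u, τm * (g x - g u) ≤
      ⟪x - (xmdk - τm • (ContinuousLinearMap.adjoint K) y), u - x⟫)
    (hx2 : ∀ u, τ * (g xp - g u) ≤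
      ⟪xp - (xmd1 - τ • (ContinuousLinearMap.adjoint K) yp), u - xp⟫)
    (hy2 : ∀ u, (β * τ) * (h yp - h u) ≤ ⟪yp - (ymd1 + (β * τ) • K xb), u - yp⟫)
    (hls : Real.sqrt β * τ * ‖(ContinuousLinearMap.adjoint K) (yp - y)‖ ≤ δ * ‖yp - y‖)
    (xh : X) (yh : Y) (hs : IsSaddlePoint g h K xh yh) :
    τ * ((1 + θ') * auxP g K xh yh x - θ' * auxP g K xh yh xm) ≤
      ⟪xp - xmd1, xh - xp⟫ + (1 / β) * ⟪yp - ymd1, yh - yp⟫ + θ' * ⟪x - xmdk, xp - xb⟫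
      + (δ / 2) * ((1 / β) * ‖yp - y‖ ^ 2 + ‖xp - xb‖ ^ 2) := by
  have hτ0 : 0 ≤ τ := by rw [hτ]; positivity
  -- the dual inequality, divided by β
  have d1 := hy2 yh
  have d2 : τ * (h yp - h yh) ≤ (1 / β) * ⟪yp - ymd1, yh - yp⟫ - τ * ⟪K xb, yh - yp⟫ := by
    have e : yp - (ymd1 + (β * τ) • K xb) = (yp - ymd1) - (β * τ) • K xb := by abel
    rw [e, inner_sub_left, real_inner_smul_left] at d1
    have := mul_le_mul_of_nonneg_left d1 (by positivity : 0 ≤ 1 / β)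
    have e2 : (1 / β) * (β * τ * (h yp - h yh)) = τ * (h yp - h yh) := by field_simp
    have e3 : (1 / β) * (⟪yp - ymd1, yh - yp⟫ - β * τ * ⟪K xb, yh - yp⟫)
      = (1 / β) * ⟪yp - ymd1, yh - yp⟫ - τ * ⟪K xb, yh - yp⟫ := by field_simp
    linarith
  -- the line search
  have d3 : - (τ * ⟪(ContinuousLinearMap.adjoint K) (yp - y), xp - xb⟫) ≤
      (δ / 2) * ((1 / β) * ‖yp - y‖ ^ 2 + ‖xp - xb‖ ^ 2) := by
    have hsb : 0 < Real.sqrt β := Real.sqrt_pos.2 hβ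
    have hsq : Real.sqrt β ^ 2 = β := Real.sq_sqrt hβ.le
    have i1 := neg_le_of_abs_le (abs_real_inner_le_norm
      ((ContinuousLinearMap.adjoint K) (yp - y)) (xp - xb))
    have i2 : τ * ‖(ContinuousLinearMap.adjoint K) (yp - y)‖ ≤
        δ * (‖yp - y‖ / Real.sqrt β) := by
      rw [← mul_div_assoc, le_div_iff₀ hsb]; linarith
    have i3 : (1 / β) * ‖yp - y‖ ^ 2 = (‖yp - y‖ / Real.sqrt β) ^ 2 := by
      rw [div_pow, hsq]; ring
    rw [i3]
    have i4 := mul_le_mul_of_nonneg_right i2 (norm_nonneg (xp - xb))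
    have i5 := mul_le_mul_of_nonneg_left i1 hτ0
    nlinarith [mul_nonneg hδ (sq_nonneg (‖yp - y‖ / Real.sqrt β - ‖xp - xb‖))]
  -- saddle
  have d4 : 0 ≤ h yp - h yh - ⟪K xh, yp - yh⟫ := by
    have := (hs xh yp).1
    rw [inner_sub_right]; linarith
  have d5 := mul_nonneg hτ0 d4
  have p1 := hx2 xh
  have p2 := mul_le_mul_of_nonneg_left (hx1 xp) hθ'
  have p3 := mul_le_mul_of_nonneg_left (hx1 xm) (mul_nonneg hθ' hθ')
  have c1 : ∀ (u : X) (v : Y), ⟪K u, v⟫ = ⟪(ContinuousLinearMap.adjoint K) v, u⟫ := by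
    intro u v
    rw [ContinuousLinearMap.adjoint_inner_left, real_inner_comm]
  rw [c1] at d2 d5
  unfold auxP
  generalize (1 / β) * ⟪yp - ymd1, yh - yp⟫ = Q1 at *
  generalize (δ / 2) * ((1 / β) * ‖yp - y‖ ^ 2 + ‖xp - xb‖ ^ 2) = Q2 at *
  simp only [map_sub] at *
  generalize (ContinuousLinearMap.adjoint K) y = ky at *
  generalize (ContinuousLinearMap.adjoint K) yp = kyp at *
  generalize (ContinuousLinearMap.adjoint K) yh = kyh at *
  clear hx1 hx2 hy2 hls d1 d4 hs c1
  subst hxb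
  subst hτ
  simp only [inner_sub_left, inner_sub_right, inner_add_right, inner_smul_left, inner_smul_right,
    RCLike.conj_to_real, smul_sub] at *
  nlinarith

theorem aux_step (g : X → ℝ) (h : Y → ℝ) (K : X →L[ℝ] Y)
    (β δ θ τm τ θ' : ℝ) (hβ : 0 < β) (hτm : 0 < τm) (hτ : τ = θ' * τm) (hθ' : 0 ≤ θ')
    (hθθ : θ' ≤ θ) (hδ : 0 ≤ δ) (a a1 a2 b1 b2 : ℝ) (ha0 : 0 ≤ a) (haa : a1 ≤ a)
    (hb2 : 0 ≤ b2) (hb2' : b2 ≤ 1)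
    (xm x xp xb xmdk xmd1 xagk xag1 xag2 : X) (y yp ymd1 yag1 yag2 : Y)
    (hxb : xb = x + θ' • (x - xm))
    (hxmdk : xmdk = (1 - a) • xm + a • xagk) (hxmd1 : xmd1 = (1 - a1) • x + a1 • xag1)
    (hxag2 : xag2 = (1 - a2) • xag1 + a2 • xp)
    (hymd1 : ymd1 = (1 - b1) • y + b1 • yag1)
    (hyag2 : yag2 = (1 - b2) • yag1 + b2 • yp)
    (hx1 : ∀ u, τm * (g x - g u) ≤
      ⟪x - (xmdk - τm • (ContinuousLinearMap.adjoint K) y), u - x⟫)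
    (hx2 : ∀ u, τ * (g xp - g u) ≤
      ⟪xp - (xmd1 - τ • (ContinuousLinearMap.adjoint K) yp), u - xp⟫)
    (hy2 : ∀ u, (β * τ) * (h yp - h u) ≤ ⟪yp - (ymd1 + (β * τ) • K xb), u - yp⟫)
    (hls : Real.sqrt β * τ * ‖(ContinuousLinearMap.adjoint K) (yp - y)‖ ≤ δ * ‖yp - y‖)
    (xh : X) (yh : Y) (hs : IsSaddlePoint g h K xh yh) :
    (1 - a2) * ‖xp - xh‖ ^ 2 + ‖xag2 - xh‖ ^ 2 + a1 * ‖xp - xag1‖ ^ 2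
      + (1 / β) * ((1 - b2) * ‖yp - yh‖ ^ 2 + ‖yag2 - yh‖ ^ 2)
      + 2 * (τ * (1 + θ')) * auxP g K xh yh x
      + ((1 - a) * (θ' ^ 2 * ‖x - xm‖ ^ 2) + (1 - a - δ - θ ^ 2 * a) * ‖xp - xb‖ ^ 2
        + a2 * (1 - a2) * ‖xp - xag1‖ ^ 2
        + (1 / β) * ((1 - b1 - δ) * ‖yp - y‖ ^ 2 + b1 * ‖yp - yag1‖ ^ 2))
    ≤ (1 - a1) * ‖x - xh‖ ^ 2 + (1 + (a1 - a2)) * ‖xag1 - xh‖ ^ 2 + a * ‖x - xagk‖ ^ 2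
      + (1 / β) * ((1 - b1) * ‖y - yh‖ ^ 2 + (1 + (b1 - b2)) * ‖yag1 - yh‖ ^ 2)
      + 2 * (τ * θ') * auxP g K xh yh xm := by
  have core := aux_core g h K β δ τm τ θ' hβ hτm hτ hθ' hδ xm x xp xb xmdk xmd1 y yp ymd1 hxb
    hx1 hx2 hy2 hls xh yh hs
  have e1 := aux_md a1 xp x xag1 xh
  have e2 := aux_md b1 yp y yag1 yh
  have e3 := aux_extrap a θ' θ ha0 hθ' hθθ xm x xp xagk xb hxb
  have e4 := aux_ag a2 xp xag1 xh
  have e5 := aux_ag b2 yp yag1 yh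
  rw [← hxmd1] at e1
  rw [← hymd1] at e2
  rw [← hxmdk] at e3
  rw [← hxag2] at e4
  rw [← hyag2] at e5
  have e6 : (a1 - a) * ‖xp - x‖ ^ 2 ≤ 0 := mul_nonpos_of_nonpos_of_nonneg (by linarith) (sq_nonneg _)
  have e7 : 0 ≤ (1 / β) * (b2 * (1 - b2) * ‖yp - yag1‖ ^ 2) := by
    have : 0 ≤ 1 - b2 := by linarith
    positivity
  have e2' := congrArg (fun t => (1 / β) * t) e2
  have e5' := congrArg (fun t => (1 / β) * t) e5
  rw [e4]
  rw [e5]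
  linarith

end step

theorem aux_gen {Z : Type*} [NormedAddCommGroup Z] (C : ℝ) (u : ℕ → Z) (p : Z) (n : ℕ) (c : ℝ)
    (hc : 0 < c) (hu : ∀ j, c * ‖u (j + n) - p‖ ^ 2 ≤ C) : ∃ B, ∀ j, ‖u j‖ ≤ B := by
  have h1 : ∀ j, ‖u (j + n)‖ ≤ Real.sqrt (C / c) + ‖p‖ := by
    intro j
    have h2 : ‖u (j + n) - p‖ ≤ Real.sqrt (C / c) := by
      apply Real.le_sqrt_of_sq_le
      rw [le_div_iff₀ hc]; linarith [hu j]
    calc ‖u (j + n)‖ = ‖(u (j + n) - p) + p‖ := by rw [sub_add_cancel]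
      _ ≤ _ := (norm_add_le _ _).trans (by linarith)
  refine ⟨(Real.sqrt (C / c) + ‖p‖) + ∑ i ∈ Finset.range n, ‖u i‖, fun j => ?_⟩
  have hsum : 0 ≤ ∑ i ∈ Finset.range n, ‖u i‖ := Finset.sum_nonneg fun _ _ => norm_nonneg _
  by_cases hj : n ≤ j
  · obtain ⟨i, rfl⟩ := Nat.exists_eq_add_of_le' hj
    linarith [h1 i]
  · have := Finset.single_le_sum (f := fun i => ‖u i‖) (fun i _ => norm_nonneg _)
      (Finset.mem_range.2 (not_le.1 hj))
    have h3 : 0 ≤ Real.sqrt (C / c) + ‖p‖ := by positivity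
    linarith

section main
variable {X Y : Type*}
    [NormedAddCommGroup X] [InnerProductSpace ℝ X] [FiniteDimensional ℝ X]
    [NormedAddCommGroup Y] [InnerProductSpace ℝ Y] [FiniteDimensional ℝ Y]

/-- The NPDAL iteration, bundled. -/
structure AuxNP (g : X → ℝ) (h : Y → ℝ) (K : X →L[ℝ] Y) (a b : ℕ → ℝ) (β δ θ : ℝ)
    (τs θs : ℕ → ℝ) (τlow : ℝ) (x xag xmd xbar : ℕ → X) (y yag ymd : ℕ → Y) : Prop where
  hgc : Continuous g
  hhc : Continuous h
  ha : ∀ k, a k ∈ Set.Ioo (0 : ℝ) 1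
  hb : ∀ k, b k ∈ Set.Ioo (0 : ℝ) 1
  haanti : Antitone a
  hbanti : Antitone b
  hβ : 0 < β
  hδ : 0 < δ
  hconda : ∀ k, δ + θ ^ 2 * a k + a k < 1
  hcondb : ∀ k, δ + b k < 1
  hτpos : ∀ k, 0 < τs k
  hθpos : ∀ k, 0 < θs k
  hτθ : ∀ k, τs (k + 1) = θs (k + 1) * τs k
  hτub : ∀ k, θs (k + 1) ^ 2 ≤ 1 + θs k
  hθub : ∀ k, θs k ≤ θ
  hτlow : 0 < τlow
  hτlb : ∀ k, τlow ≤ τs k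
  hxag : ∀ k, xag (k + 1) = (1 - a (k + 1)) • xag k + a (k + 1) • x k
  hxmd : ∀ k, xmd (k + 1) = (1 - a (k + 1)) • x k + a (k + 1) • xag (k + 1)
  hx : ∀ k u, τs k * (g (x (k + 1)) - g u) ≤
      ⟪x (k + 1) - (xmd (k + 1) - τs k • (ContinuousLinearMap.adjoint K) (y (k + 1))), u - x (k + 1)⟫
  hxbar : ∀ k, xbar (k + 1) = x (k + 1) + θs (k + 1) • (x (k + 1) - x k)
  hyag : ∀ k, yag (k + 2) = (1 - b (k + 2)) • yag (k + 1) + b (k + 2) • y (k + 1)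
  hymd : ∀ k, ymd (k + 2) = (1 - b (k + 2)) • y (k + 1) + b (k + 2) • yag (k + 2)
  hy : ∀ k u, (β * τs (k + 1)) * (h (y (k + 2)) - h u) ≤
      ⟪y (k + 2) - (ymd (k + 2) + (β * τs (k + 1)) • K (xbar (k + 1))), u - y (k + 2)⟫
  hls : ∀ k, Real.sqrt β * τs (k + 1) *
        ‖(ContinuousLinearMap.adjoint K) (y (k + 2) - y (k + 1))‖ ≤
      δ * ‖y (k + 2) - y (k + 1)‖

namespace AuxNP
open Filter Topology

variable {g : X → ℝ} {h : Y → ℝ} {K : X →L[ℝ] Y} {a b : ℕ → ℝ} {β δ θ : ℝ}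
    {τs θs : ℕ → ℝ} {τlow : ℝ} {x xag xmd xbar : ℕ → X} {y yag ymd : ℕ → Y}

/-- energy -/
noncomputable def En (g : X → ℝ) (K : X →L[ℝ] Y) (a b : ℕ → ℝ) (β : ℝ) (τs θs : ℕ → ℝ)
    (x xag : ℕ → X) (y yag : ℕ → Y) (xh : X) (yh : Y) (j : ℕ) : ℝ :=
  (1 - a (j + 2)) * ‖x (j + 1) - xh‖ ^ 2 + ‖xag (j + 2) - xh‖ ^ 2
    + a (j + 1) * ‖x (j + 1) - xag (j + 1)‖ ^ 2
    + (1 / β) * ((1 - b (j + 2)) * ‖y (j + 1) - yh‖ ^ 2 + ‖yag (j + 2) - yh‖ ^ 2)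
    + 2 * (τs j * (1 + θs j)) * auxP g K xh yh (x j)

/-- residual -/
noncomputable def Rs (g : X → ℝ) (K : X →L[ℝ] Y) (a b : ℕ → ℝ) (β δ θ : ℝ) (τs θs : ℕ → ℝ)
    (x xag xbar : ℕ → X) (y yag : ℕ → Y) (xh : X) (yh : Y) (j : ℕ) : ℝ :=
  (1 - a (j + 1)) * (θs (j + 1) ^ 2 * ‖x (j + 1) - x j‖ ^ 2)
    + (1 - a (j + 1) - δ - θ ^ 2 * a (j + 1)) * ‖x (j + 2) - xbar (j + 1)‖ ^ 2
    + a (j + 3) * (1 - a (j + 3)) * ‖x (j + 2) - xag (j + 2)‖ ^ 2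
    + (1 / β) * ((1 - b (j + 2) - δ) * ‖y (j + 2) - y (j + 1)‖ ^ 2
      + b (j + 2) * ‖y (j + 2) - yag (j + 2)‖ ^ 2)
    + 2 * (τs j * (1 + θs j - θs (j + 1) ^ 2)) * auxP g K xh yh (x j)

section

theorem step
    (S : AuxNP g h K a b β δ θ τs θs τlow x xag xmd xbar y yag ymd)
    {xh : X} {yh : Y} (hs : IsSaddlePoint g h K xh yh) (j : ℕ) :
    En g K a b β τs θs x xag y yag xh yh (j + 1) + Rs g K a b β δ θ τs θs x xag xbar y yag xh yh j
      ≤ (1 + ((a (j + 2) + b (j + 2)) - (a (j + 3) + b (j + 3))))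
        * En g K a b β τs θs x xag y yag xh yh j := by
  have := aux_step g h K β δ θ (τs j) (τs (j + 1)) (θs (j + 1)) S.hβ (S.hτpos j) (S.hτθ j)
    (S.hθpos _).le (S.hθub _) S.hδ.le (a (j + 1)) (a (j + 2)) (a (j + 3)) (b (j + 2)) (b (j + 3))
    (S.ha _).1.le (S.haanti (by omega)) (S.hb _).1.le (S.hb _).2.le
    (x j) (x (j + 1)) (x (j + 2)) (xbar (j + 1)) (xmd (j + 1)) (xmd (j + 2)) (xag (j + 1))
    (xag (j + 2)) (xag (j + 3)) (y (j + 1)) (y (j + 2)) (ymd (j + 2)) (yag (j + 2)) (yag (j + 3))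
    (S.hxbar j) (S.hxmd j) (S.hxmd (j + 1)) (S.hxag (j + 2)) (S.hymd j) (S.hyag (j + 1))
    (S.hx j) (S.hx (j + 1)) (S.hy j) (S.hls j) xh yh hs
  have hP := auxP_nonneg hs (x j)
  have hτ : τs (j + 1) * θs (j + 1) = τs j * θs (j + 1) ^ 2 := by rw [S.hτθ j]; ring
  rw [hτ] at this
  have hA : 0 ≤ a (j + 2) - a (j + 3) := sub_nonneg.2 (S.haanti (by omega))
  have hB : 0 ≤ b (j + 2) - b (j + 3) := sub_nonneg.2 (S.hbanti (by omega))
  have hβ' : 0 < 1 / β := by have := S.hβ; positivity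
  have q1 : 0 ≤ (1 - a (j + 2)) * ‖x (j + 1) - xh‖ ^ 2 :=
    mul_nonneg (by linarith [(S.ha (j + 2)).2]) (sq_nonneg _)
  have q2 : 0 ≤ ‖xag (j + 2) - xh‖ ^ 2 := sq_nonneg _
  have q3 : 0 ≤ a (j + 1) * ‖x (j + 1) - xag (j + 1)‖ ^ 2 :=
    mul_nonneg (S.ha _).1.le (sq_nonneg _)
  have q4 : 0 ≤ (1 / β) * ((1 - b (j + 2)) * ‖y (j + 1) - yh‖ ^ 2) :=
    mul_nonneg hβ'.le (mul_nonneg (by linarith [(S.hb (j + 2)).2]) (sq_nonneg _))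
  have q5 : 0 ≤ (1 / β) * ‖yag (j + 2) - yh‖ ^ 2 := by positivity
  have q6 : 0 ≤ 2 * (τs j * (1 + θs j)) * auxP g K xh yh (x j) := by
    have := S.hτpos j
    have := S.hθpos j
    positivity
  unfold En Rs
  have hAB : 0 ≤ (a (j + 2) - a (j + 3)) + (b (j + 2) - b (j + 3)) := by linarith
  nlinarith [mul_nonneg hAB q1, mul_nonneg hB q2, mul_nonneg hAB q3, mul_nonneg hAB q4,
    mul_nonneg hA q5, mul_nonneg hAB q6]

theorem terms
    (S : AuxNP g h K a b β δ θ τs θs τlow x xag xmd xbar y yag ymd)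
    {xh : X} {yh : Y} (hs : IsSaddlePoint g h K xh yh) (j : ℕ) :
    0 ≤ (1 - a (j + 1)) * (θs (j + 1) ^ 2 * ‖x (j + 1) - x j‖ ^ 2) ∧
    0 ≤ (1 - a (j + 1) - δ - θ ^ 2 * a (j + 1)) * ‖x (j + 2) - xbar (j + 1)‖ ^ 2 ∧
    0 ≤ a (j + 3) * (1 - a (j + 3)) * ‖x (j + 2) - xag (j + 2)‖ ^ 2 ∧
    0 ≤ (1 / β) * ((1 - b (j + 2) - δ) * ‖y (j + 2) - y (j + 1)‖ ^ 2) ∧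
    0 ≤ (1 / β) * (b (j + 2) * ‖y (j + 2) - yag (j + 2)‖ ^ 2) ∧
    0 ≤ 2 * (τs j * (1 + θs j - θs (j + 1) ^ 2)) * auxP g K xh yh (x j) := by
  have hβ' : 0 < 1 / β := by have := S.hβ; positivity
  have hP := auxP_nonneg hs (x j)
  have h1 : 0 ≤ 1 - a (j + 1) := by linarith [(S.ha (j + 1)).2]
  have h2 : 0 ≤ 1 - a (j + 1) - δ - θ ^ 2 * a (j + 1) := by linarith [S.hconda (j + 1)]
  have h3 : 0 ≤ 1 - a (j + 3) := by linarith [(S.ha (j + 3)).2]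
  have h3' := (S.ha (j + 3)).1
  have h4 : 0 ≤ 1 - b (j + 2) - δ := by linarith [S.hcondb (j + 2)]
  have h5 := (S.hb (j + 2)).1
  have h6 : 0 ≤ 1 + θs j - θs (j + 1) ^ 2 := by linarith [S.hτub j]
  have h7 := S.hτpos j
  refine ⟨?_, ?_, ?_, ?_, ?_, ?_⟩ <;> positivity

theorem En_nonneg
    (S : AuxNP g h K a b β δ θ τs θs τlow x xag xmd xbar y yag ymd)
    {xh : X} {yh : Y} (hs : IsSaddlePoint g h K xh yh) (j : ℕ) :
    (1 - a 0) * ‖x (j + 1) - xh‖ ^ 2 ≤ En g K a b β τs θs x xag y yag xh yh j ∧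
    ‖xag (j + 2) - xh‖ ^ 2 ≤ En g K a b β τs θs x xag y yag xh yh j ∧
    (1 / β) * ((1 - b 0) * ‖y (j + 1) - yh‖ ^ 2) ≤ En g K a b β τs θs x xag y yag xh yh j ∧
    (1 / β) * ‖yag (j + 2) - yh‖ ^ 2 ≤ En g K a b β τs θs x xag y yag xh yh j ∧
    0 ≤ En g K a b β τs θs x xag y yag xh yh j := by
  have hP := auxP_nonneg hs (x j)
  have hβ' : 0 < 1 / β := by have := S.hβ; positivity
  have q0 : (1 - a 0) * ‖x (j + 1) - xh‖ ^ 2 ≤ (1 - a (j + 2)) * ‖x (j + 1) - xh‖ ^ 2 :=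
    mul_le_mul_of_nonneg_right (by linarith [S.haanti (Nat.zero_le (j + 2))]) (sq_nonneg _)
  have q0' : (1 / β) * ((1 - b 0) * ‖y (j + 1) - yh‖ ^ 2) ≤
      (1 / β) * ((1 - b (j + 2)) * ‖y (j + 1) - yh‖ ^ 2) :=
    mul_le_mul_of_nonneg_left (mul_le_mul_of_nonneg_right
      (by linarith [S.hbanti (Nat.zero_le (j + 2))]) (sq_nonneg _)) hβ'.le
  have q1 : 0 ≤ (1 - a (j + 2)) * ‖x (j + 1) - xh‖ ^ 2 :=
    mul_nonneg (by linarith [(S.ha (j + 2)).2]) (sq_nonneg _)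
  have q2 : 0 ≤ ‖xag (j + 2) - xh‖ ^ 2 := sq_nonneg _
  have q3 : 0 ≤ a (j + 1) * ‖x (j + 1) - xag (j + 1)‖ ^ 2 :=
    mul_nonneg (S.ha _).1.le (sq_nonneg _)
  have q4 : 0 ≤ (1 / β) * ((1 - b (j + 2)) * ‖y (j + 1) - yh‖ ^ 2) :=
    mul_nonneg hβ'.le (mul_nonneg (by linarith [(S.hb (j + 2)).2]) (sq_nonneg _))
  have q5 : 0 ≤ (1 / β) * ‖yag (j + 2) - yh‖ ^ 2 := by positivity
  have q6 : 0 ≤ 2 * (τs j * (1 + θs j)) * auxP g K xh yh (x j) := by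
    have := S.hτpos j
    have := S.hθpos j
    positivity
  unfold En
  rw [mul_add (1 / β)]
  refine ⟨?_, ?_, ?_, ?_, ?_⟩ <;> linarith

theorem conv
    (S : AuxNP g h K a b β δ θ τs θs τlow x xag xmd xbar y yag ymd)
    {xh : X} {yh : Y} (hs : IsSaddlePoint g h K xh yh) :
    (∃ l, Tendsto (En g K a b β τs θs x xag y yag xh yh) atTop (𝓝 l)) ∧
    Tendsto (Rs g K a b β δ θ τs θs x xag xbar y yag xh yh) atTop (𝓝 0) := by
  refine aux_quasi _ _ (fun j => a (j + 2) + b (j + 2)) (fun j => (S.En_nonneg hs j).2.2.2.2)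
    (fun j => ?_) (fun j => by linarith [(S.ha (j + 2)).1, (S.hb (j + 2)).1])
    (fun i j hij => add_le_add (S.haanti (by omega)) (S.hbanti (by omega))) (S.step hs)
  obtain ⟨h1, h2, h3, h4, h5, h6⟩ := S.terms hs j
  unfold Rs
  linarith

/-- from `c * r k ^ 2 ≤ R k → 0` -/
theorem to_zero
    (S : AuxNP g h K a b β δ θ τs θs τlow x xag xmd xbar y yag ymd)
    {xh : X} {yh : Y} (hs : IsSaddlePoint g h K xh yh) (c : ℝ) (hc : 0 < c)
    (r : ℕ → ℝ) (hr : ∀ j, c * r j ^ 2 ≤ Rs g K a b β δ θ τs θs x xag xbar y yag xh yh j) :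
    Tendsto r atTop (𝓝 0) := by
  have h1 := (S.conv hs).2.div_const c
  rw [zero_div] at h1
  have h2 : Tendsto (fun j => r j ^ 2) atTop (𝓝 0) :=
    squeeze_zero (fun j => sq_nonneg _) (fun j => by
      rw [le_div_iff₀ hc]; linarith [hr j]) h1
  have h3 : Tendsto (fun j => Real.sqrt (r j ^ 2)) atTop (𝓝 0) := by
    have := (Real.continuous_sqrt.tendsto 0).comp h2
    simpa [Function.comp_def] using this
  rw [tendsto_zero_iff_abs_tendsto_zero]
  refine h3.congr fun j => ?_
  simp [Real.sqrt_sq_eq_abs]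

theorem t_theta
    (S : AuxNP g h K a b β δ θ τs θs τlow x xag xmd xbar y yag ymd)
    {xh : X} {yh : Y} (hs : IsSaddlePoint g h K xh yh) :
    Tendsto (fun j => θs (j + 1) * ‖x (j + 1) - x j‖) atTop (𝓝 0) := by
  refine S.to_zero hs (1 - a 0) (by linarith [(S.ha 0).2]) _ fun j => ?_
  obtain ⟨h1, h2, h3, h4, h5, h6⟩ := S.terms hs j
  have : (1 - a 0) * (θs (j + 1) * ‖x (j + 1) - x j‖) ^ 2 ≤
      (1 - a (j + 1)) * (θs (j + 1) ^ 2 * ‖x (j + 1) - x j‖ ^ 2) := by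
    rw [mul_pow]
    exact mul_le_mul_of_nonneg_right (by linarith [S.haanti (Nat.zero_le (j + 1))]) (by positivity)
  unfold Rs
  linarith

theorem t_xbar
    (S : AuxNP g h K a b β δ θ τs θs τlow x xag xmd xbar y yag ymd)
    {xh : X} {yh : Y} (hs : IsSaddlePoint g h K xh yh) :
    Tendsto (fun j => ‖x (j + 2) - xbar (j + 1)‖) atTop (𝓝 0) := by
  refine S.to_zero hs (1 - a 0 - δ - θ ^ 2 * a 0) (by linarith [S.hconda 0]) _ fun j => ?_
  obtain ⟨h1, h2, h3, h4, h5, h6⟩ := S.terms hs j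
  have ha := S.haanti (Nat.zero_le (j + 1))
  have : (1 - a 0 - δ - θ ^ 2 * a 0) * ‖x (j + 2) - xbar (j + 1)‖ ^ 2 ≤
      (1 - a (j + 1) - δ - θ ^ 2 * a (j + 1)) * ‖x (j + 2) - xbar (j + 1)‖ ^ 2 :=
    mul_le_mul_of_nonneg_right
      (by linarith [mul_le_mul_of_nonneg_left ha (sq_nonneg θ)]) (by positivity)
  unfold Rs
  linarith

theorem t_xag
    (S : AuxNP g h K a b β δ θ τs θs τlow x xag xmd xbar y yag ymd)
    {xh : X} {yh : Y} (hs : IsSaddlePoint g h K xh yh) :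
    Tendsto (fun j => a (j + 3) * ‖x (j + 2) - xag (j + 2)‖) atTop (𝓝 0) := by
  refine S.to_zero hs (1 - a 0) (by linarith [(S.ha 0).2]) _ fun j => ?_
  obtain ⟨h1, h2, h3, h4, h5, h6⟩ := S.terms hs j
  have q1 := S.haanti (Nat.zero_le (j + 3))
  have q2 := (S.ha (j + 3)).1
  have q3 := (S.ha (j + 3)).2
  have q4 := (S.ha 0).2
  have : (1 - a 0) * (a (j + 3) * ‖x (j + 2) - xag (j + 2)‖) ^ 2 ≤
      a (j + 3) * (1 - a (j + 3)) * ‖x (j + 2) - xag (j + 2)‖ ^ 2 := by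
    have e : (1 - a 0) * (a (j + 3) * ‖x (j + 2) - xag (j + 2)‖) ^ 2 =
      ((1 - a 0) * a (j + 3) ^ 2) * ‖x (j + 2) - xag (j + 2)‖ ^ 2 := by ring
    rw [e]
    refine mul_le_mul_of_nonneg_right ?_ (sq_nonneg _)
    nlinarith [mul_nonneg q2.le (sub_nonneg.2 q3.le), mul_nonneg q2.le (sub_nonneg.2 q1),
      mul_nonneg (mul_nonneg q2.le (sub_nonneg.2 q3.le)) (sub_nonneg.2 q4.le)]
  unfold Rs
  linarith

theorem t_dy
    (S : AuxNP g h K a b β δ θ τs θs τlow x xag xmd xbar y yag ymd)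
    {xh : X} {yh : Y} (hs : IsSaddlePoint g h K xh yh) :
    Tendsto (fun j => ‖y (j + 2) - y (j + 1)‖) atTop (𝓝 0) := by
  have hβ' : 0 < 1 / β := by have := S.hβ; positivity
  refine S.to_zero hs ((1 / β) * (1 - b 0 - δ))
    (mul_pos hβ' (by linarith [S.hcondb 0])) _ fun j => ?_
  obtain ⟨h1, h2, h3, h4, h5, h6⟩ := S.terms hs j
  have : (1 / β) * (1 - b 0 - δ) * ‖y (j + 2) - y (j + 1)‖ ^ 2 ≤
      (1 / β) * ((1 - b (j + 2) - δ) * ‖y (j + 2) - y (j + 1)‖ ^ 2) := by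
    rw [mul_assoc]
    exact mul_le_mul_of_nonneg_left (mul_le_mul_of_nonneg_right
      (by linarith [S.hbanti (Nat.zero_le (j + 2))]) (sq_nonneg _)) hβ'.le
  unfold Rs
  linarith

theorem t_yag
    (S : AuxNP g h K a b β δ θ τs θs τlow x xag xmd xbar y yag ymd)
    {xh : X} {yh : Y} (hs : IsSaddlePoint g h K xh yh) :
    Tendsto (fun j => b (j + 2) * ‖y (j + 2) - yag (j + 2)‖) atTop (𝓝 0) := by
  have hβ' : 0 < 1 / β := by have := S.hβ; positivity
  refine S.to_zero hs (1 / β) hβ' _ fun j => ?_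
  obtain ⟨h1, h2, h3, h4, h5, h6⟩ := S.terms hs j
  have : (1 / β) * (b (j + 2) * ‖y (j + 2) - yag (j + 2)‖) ^ 2 ≤
      (1 / β) * (b (j + 2) * ‖y (j + 2) - yag (j + 2)‖ ^ 2) := by
    rw [mul_pow]
    refine mul_le_mul_of_nonneg_left (mul_le_mul_of_nonneg_right ?_ (sq_nonneg _)) hβ'.le
    nlinarith [(S.hb (j + 2)).1, (S.hb (j + 2)).2]
  unfold Rs
  linarith

/-- step differences -/
theorem t_dx
    (S : AuxNP g h K a b β δ θ τs θs τlow x xag xmd xbar y yag ymd)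
    {xh : X} {yh : Y} (hs : IsSaddlePoint g h K xh yh) :
    Tendsto (fun j => ‖x (j + 2) - x (j + 1)‖) atTop (𝓝 0) := by
  have h1 := (S.t_xbar hs).add (S.t_theta hs)
  rw [add_zero] at h1
  refine squeeze_zero (fun j => norm_nonneg _) (fun j => ?_) h1
  have e : x (j + 2) - x (j + 1) = (x (j + 2) - xbar (j + 1)) + θs (j + 1) • (x (j + 1) - x j) := by
    rw [S.hxbar j]; abel
  rw [e]
  refine (norm_add_le _ _).trans (le_of_eq ?_)
  rw [norm_smul, Real.norm_eq_abs, abs_of_pos (S.hθpos _)]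

theorem t_xmd
    (S : AuxNP g h K a b β δ θ τs θs τlow x xag xmd xbar y yag ymd)
    {xh : X} {yh : Y} (hs : IsSaddlePoint g h K xh yh) :
    Tendsto (fun j => ‖x j - xmd j‖) atTop (𝓝 0) := by
  rw [← tendsto_add_atTop_iff_nat 3]
  have h1 := ((tendsto_add_atTop_iff_nat 1).2 (S.t_dx hs)).add (S.t_xag hs)
  rw [add_zero] at h1
  refine squeeze_zero (fun j => norm_nonneg _) (fun j => ?_) h1
  have e : x (j + 3) - xmd (j + 3) = (x (j + 3) - x (j + 2)) +
      (a (j + 3) * (1 - a (j + 3))) • (x (j + 2) - xag (j + 2)) := by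
    rw [S.hxmd (j + 2), S.hxag (j + 2)]; module
  rw [e]
  refine (norm_add_le _ _).trans (add_le_add_right ?_ _)
  have q2 := (S.ha (j + 3)).1
  have q3 := (S.ha (j + 3)).2
  rw [norm_smul, Real.norm_eq_abs, abs_of_nonneg (mul_nonneg q2.le (by linarith))]
  exact mul_le_mul_of_nonneg_right (by nlinarith) (norm_nonneg _)

theorem t_ymd
    (S : AuxNP g h K a b β δ θ τs θs τlow x xag xmd xbar y yag ymd)
    {xh : X} {yh : Y} (hs : IsSaddlePoint g h K xh yh) :
    Tendsto (fun j => ‖y j - ymd j‖) atTop (𝓝 0) := by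
  rw [← tendsto_add_atTop_iff_nat 2]
  have h1 := (S.t_dy hs).add (S.t_yag hs)
  rw [add_zero] at h1
  refine squeeze_zero (fun j => norm_nonneg _) (fun j => ?_) h1
  have e : y (j + 2) - ymd (j + 2) = (1 - b (j + 2)) • (y (j + 2) - y (j + 1)) +
      b (j + 2) • (y (j + 2) - yag (j + 2)) := by
    rw [S.hymd j]; module
  have q2 := (S.hb (j + 2)).1
  have q3 := (S.hb (j + 2)).2
  rw [e]
  refine (norm_add_le _ _).trans (add_le_add ?_ (le_of_eq ?_))
  · rw [norm_smul, Real.norm_eq_abs, abs_of_nonneg (by linarith)]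
    exact mul_le_of_le_one_left (norm_nonneg _) (by linarith)
  · rw [norm_smul, Real.norm_eq_abs, abs_of_pos q2]

/-- boundedness -/
theorem bounded
    (S : AuxNP g h K a b β δ θ τs θs τlow x xag xmd xbar y yag ymd)
    {xh : X} {yh : Y} (hs : IsSaddlePoint g h K xh yh) :
    ∃ B : ℝ, (∀ j, ‖x j‖ ≤ B) ∧ (∀ j, ‖xag j‖ ≤ B) ∧ (∀ j, ‖y j‖ ≤ B) ∧ (∀ j, ‖yag j‖ ≤ B) := by
  obtain ⟨⟨l, hl⟩, -⟩ := S.conv hs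
  obtain ⟨C, hC⟩ := hl.bddAbove_range
  have hC' : ∀ j, En g K a b β τs θs x xag y yag xh yh j ≤ C := fun j => hC ⟨j, rfl⟩
  have hβ' : 0 < 1 / β := by have := S.hβ; positivity
  obtain ⟨B1, h1⟩ := aux_gen C x xh 1 (1 - a 0) (by linarith [(S.ha 0).2])
    fun j => (S.En_nonneg hs j).1.trans (hC' j)
  obtain ⟨B2, h2⟩ := aux_gen C xag xh 2 1 one_pos
    fun j => by rw [one_mul]; exact (S.En_nonneg hs j).2.1.trans (hC' j)
  obtain ⟨B4, h4⟩ := aux_gen C yag yh 2 (1 / β) hβ'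
    fun j => (S.En_nonneg hs j).2.2.2.1.trans (hC' j)
  obtain ⟨B3, h3⟩ := aux_gen C y yh 1 ((1 / β) * (1 - b 0)) (mul_pos hβ' (by linarith [(S.hb 0).2]))
    fun j => by rw [mul_assoc]; exact (S.En_nonneg hs j).2.2.1.trans (hC' j)
  refine ⟨max (max B1 B2) (max B3 B4), fun j => (h1 j).trans ?_, fun j => (h2 j).trans ?_,
    fun j => (h3 j).trans ?_, fun j => (h4 j).trans ?_⟩ <;> simp

theorem limit_saddle
    (S : AuxNP g h K a b β δ θ τs θs τlow x xag xmd xbar y yag ymd)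
    {xh : X} {yh : Y} (hs : IsSaddlePoint g h K xh yh) {φ : ℕ → ℕ}
    (hφ : Tendsto φ atTop atTop) {x1 : X} {y1 : Y}
    (hx1 : Tendsto (fun n => x (φ n)) atTop (𝓝 x1))
    (hy1 : Tendsto (fun n => y (φ n)) atTop (𝓝 y1)) : IsSaddlePoint g h K x1 y1 := by
  have hβ := S.hβ
  have hτl := S.hτlow
  have hp : ∀ k u, 2 ≤ k → g (x k) - g u - ⟪(ContinuousLinearMap.adjoint K) (y k), u - x k⟫
      ≤ (1 / τlow) * (‖x k - xmd k‖ * ‖u - x k‖) := by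
    intro k u hk
    obtain ⟨j, rfl⟩ := Nat.exists_eq_add_of_le' (show 1 ≤ k by omega)
    have h1 := S.hx j u
    have e : x (j + 1) - (xmd (j + 1) - τs j • (ContinuousLinearMap.adjoint K) (y (j + 1))) =
      (x (j + 1) - xmd (j + 1)) + τs j • (ContinuousLinearMap.adjoint K) (y (j + 1)) := by abel
    rw [e, inner_add_left, real_inner_smul_left] at h1
    have h2 := real_inner_le_norm (x (j + 1) - xmd (j + 1)) (u - x (j + 1))
    have h3 : g (x (j + 1)) - g u -
        ⟪(ContinuousLinearMap.adjoint K) (y (j + 1)), u - x (j + 1)⟫ ≤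
        (1 / τs j) * (‖x (j + 1) - xmd (j + 1)‖ * ‖u - x (j + 1)‖) := by
      rw [one_div, inv_mul_eq_div, le_div_iff₀ (S.hτpos j)]
      linarith
    refine h3.trans (mul_le_mul_of_nonneg_right ?_ (by positivity))
    exact one_div_le_one_div_of_le hτl (S.hτlb j)
  have hd : ∀ k u, 2 ≤ k → h (y k) - h u + ⟪K (x k), u - y k⟫
      ≤ (1 / (β * τlow)) * (‖y k - ymd k‖ * ‖u - y k‖) +
        (‖K‖ * ‖x k - xbar (k - 1)‖) * ‖u - y k‖ := by
    intro k u hk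
    obtain ⟨j, rfl⟩ := Nat.exists_eq_add_of_le' hk
    have e0 : j + 2 - 1 = j + 1 := rfl
    rw [e0]
    have h1 := S.hy j u
    have e : y (j + 2) - (ymd (j + 2) + (β * τs (j + 1)) • K (xbar (j + 1))) =
      (y (j + 2) - ymd (j + 2)) - (β * τs (j + 1)) • K (xbar (j + 1)) := by abel
    rw [e, inner_sub_left, real_inner_smul_left] at h1
    have h2 := real_inner_le_norm (y (j + 2) - ymd (j + 2)) (u - y (j + 2))
    have hbt : 0 < β * τs (j + 1) := mul_pos hβ (S.hτpos _)
    have h3 : h (y (j + 2)) - h u + ⟪K (xbar (j + 1)), u - y (j + 2)⟫ ≤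
        (1 / (β * τs (j + 1))) * (‖y (j + 2) - ymd (j + 2)‖ * ‖u - y (j + 2)‖) := by
      rw [one_div, inv_mul_eq_div, le_div_iff₀ hbt]
      linarith
    have h4 : (1 / (β * τs (j + 1))) * (‖y (j + 2) - ymd (j + 2)‖ * ‖u - y (j + 2)‖) ≤
        (1 / (β * τlow)) * (‖y (j + 2) - ymd (j + 2)‖ * ‖u - y (j + 2)‖) := by
      refine mul_le_mul_of_nonneg_right ?_ (by positivity)
      exact one_div_le_one_div_of_le (by positivity) (mul_le_mul_of_nonneg_left (S.hτlb _) hβ.le)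
    have h5 : ⟪K (x (j + 2)), u - y (j + 2)⟫ =
        ⟪K (xbar (j + 1)), u - y (j + 2)⟫ + ⟪K (x (j + 2) - xbar (j + 1)), u - y (j + 2)⟫ := by
      rw [← inner_add_left, ← map_add]; congr 2; abel
    have h6 := real_inner_le_norm (K (x (j + 2) - xbar (j + 1))) (u - y (j + 2))
    have h7 := mul_le_mul_of_nonneg_right (K.le_opNorm (x (j + 2) - xbar (j + 1)))
      (norm_nonneg (u - y (j + 2)))
    linarith
  have tx := (S.t_xmd hs).comp hφ
  have ty := (S.t_ymd hs).comp hφ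
  have tb : Tendsto (fun k => ‖x k - xbar (k - 1)‖) atTop (𝓝 0) := by
    rw [← tendsto_add_atTop_iff_nat 2]
    exact S.t_xbar hs
  have tb' := tb.comp hφ
  have hev : ∀ᶠ n in atTop, 2 ≤ φ n := hφ.eventually_ge_atTop 2
  have L1 : ∀ u, g x1 - g u - ⟪(ContinuousLinearMap.adjoint K) y1, u - x1⟫ ≤ 0 := by
    intro u
    have l1 : Tendsto (fun n => g (x (φ n)) - g u -
        ⟪(ContinuousLinearMap.adjoint K) (y (φ n)), u - x (φ n)⟫) atTop
        (𝓝 (g x1 - g u - ⟪(ContinuousLinearMap.adjoint K) y1, u - x1⟫)) :=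
      (((S.hgc.tendsto _).comp hx1).sub_const _).sub
        ((((ContinuousLinearMap.adjoint K).continuous.tendsto _).comp hy1).inner
          (tendsto_const_nhds.sub hx1))
    have l2 : Tendsto (fun n => (1 / τlow) * (‖x (φ n) - xmd (φ n)‖ * ‖u - x (φ n)‖)) atTop
        (𝓝 ((1 / τlow) * (0 * ‖u - x1‖))) :=
      (tx.mul (tendsto_const_nhds.sub hx1).norm).const_mul _
    rw [zero_mul, mul_zero] at l2
    exact le_of_tendsto_of_tendsto l1 l2 (hev.mono fun n hn => hp _ u hn)
  have L2 : ∀ u, h y1 - h u + ⟪K x1, u - y1⟫ ≤ 0 := by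
    intro u
    have l1 : Tendsto (fun n => h (y (φ n)) - h u + ⟪K (x (φ n)), u - y (φ n)⟫) atTop
        (𝓝 (h y1 - h u + ⟪K x1, u - y1⟫)) :=
      (((S.hhc.tendsto _).comp hy1).sub_const _).add
        (((K.continuous.tendsto _).comp hx1).inner (tendsto_const_nhds.sub hy1))
    have l2 : Tendsto (fun n => (1 / (β * τlow)) * (‖y (φ n) - ymd (φ n)‖ * ‖u - y (φ n)‖) +
        (‖K‖ * ‖x (φ n) - xbar (φ n - 1)‖) * ‖u - y (φ n)‖) atTop
        (𝓝 ((1 / (β * τlow)) * (0 * ‖u - y1‖) + (‖K‖ * 0) * ‖u - y1‖)) :=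
      ((ty.mul (tendsto_const_nhds.sub hy1).norm).const_mul _).add
        ((tb'.const_mul _).mul (tendsto_const_nhds.sub hy1).norm)
    simp only [zero_mul, mul_zero, add_zero] at l2
    exact le_of_tendsto_of_tendsto l1 l2 (hev.mono fun n hn => hd _ u hn)
  intro u v
  have h1 := L1 u
  have h2 := L2 v
  rw [ContinuousLinearMap.adjoint_inner_left, map_sub, inner_sub_right, real_inner_comm,
    real_inner_comm (K x1)] at h1
  rw [inner_sub_right] at h2
  constructor <;> linarith

theorem saddle_swap {p q : X} {y1 y2 : Y} (h1 : IsSaddlePoint g h K p y1)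
    (h2 : IsSaddlePoint g h K q y2) : IsSaddlePoint g h K q y1 := by
  intro u v
  have a1 := (h1 q y2)
  have a2 := (h2 p y1)
  have a3 := (h1 u v)
  have a4 := (h2 u v)
  constructor <;> linarith [a1.1, a1.2, a2.1, a2.2, a3.1, a3.2, a4.1, a4.2]

theorem eq_of_inner {u : ℕ → X} {p q : X} {φ ψ : ℕ → ℕ} (hφ : Tendsto φ atTop atTop)
    (hψ : Tendsto ψ atTop atTop) (hp : Tendsto (fun n => u (φ n)) atTop (𝓝 p))
    (hq : Tendsto (fun n => u (ψ n)) atTop (𝓝 q))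
    (hc : ∃ l, Tendsto (fun j => ⟪u (j + 1), p - q⟫) atTop (𝓝 l)) : p = q := by
  obtain ⟨l, hl⟩ := hc
  have hl' : Tendsto (fun j => ⟪u j, p - q⟫) atTop (𝓝 l) := (tendsto_add_atTop_iff_nat 1).1 hl
  have e1 := tendsto_nhds_unique (hl'.comp hφ) (hp.inner tendsto_const_nhds)
  have e2 := tendsto_nhds_unique (hl'.comp hψ) (hq.inner tendsto_const_nhds)
  have e3 : ⟪p - q, p - q⟫ = 0 := by rw [inner_sub_left, ← e1, ← e2, sub_self]
  exact sub_eq_zero.1 (inner_self_eq_zero.1 e3)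

theorem sq_diff (u p q : X) : ‖u - p‖ ^ 2 - ‖u - q‖ ^ 2 =
    -2 * ⟪u, p - q⟫ + (‖p‖ ^ 2 - ‖q‖ ^ 2) := by
  rw [norm_sub_sq_real, norm_sub_sq_real, inner_sub_right]; ring

/-- scalar convergence for one-step good sequences -/
theorem inner_conv_of (u : ℕ → X) {p : X} (hdu : Tendsto (fun j => ‖u (j + 2) - u (j + 1)‖) atTop (𝓝 0)) :
    ∀ ε > 0, ∃ M, ∀ m, M ≤ m → True → ∀ k, m ≤ k →
      (∀ j, m < j → j < k → ¬ True) → |⟪u (k + 1), p⟫ - ⟪u (m + 1), p⟫| ≤ ε := by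
  intro ε hε
  have h1 := hdu.mul_const ‖p‖
  rw [zero_mul] at h1
  obtain ⟨M, hM⟩ := eventually_atTop.1 (h1.eventually_le_const hε)
  refine ⟨M, fun m hm _ k hk hbad => ?_⟩
  rcases Nat.eq_or_lt_of_le hk with rfl | hlt
  · simp [hε.le]
  · have hk1 : k = m + 1 := by
      by_contra hne
      exact hbad (m + 1) (by omega) (by omega) trivial
    subst hk1
    rw [← inner_sub_left]
    exact (abs_real_inner_le_norm _ _).trans (hM m hm)

theorem x_conv
    (S : AuxNP g h K a b β δ θ τs θs τlow x xag xmd xbar y yag ymd)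
    {xh : X} {yh : Y} (hs : IsSaddlePoint g h K xh yh) :
    ∃ p, Tendsto x atTop (𝓝 p) := by
  obtain ⟨B, hBx, hBxag, hBy, hByag⟩ := S.bounded hs
  have : ProperSpace Y := FiniteDimensional.proper_real Y
  have hsub : ∀ φ : ℕ → ℕ, ∃ q, ∃ χ : ℕ → ℕ, StrictMono χ ∧
      Tendsto (fun n => y (φ (χ n))) atTop (𝓝 q) := by
    intro φ
    obtain ⟨p, -, χ, h1, h2⟩ := (isCompact_closedBall (0 : Y) B).tendsto_subseq
      (x := fun n => y (φ n)) (fun k => by simpa using hBy (φ k))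
    exact ⟨p, χ, h1, h2⟩
  refine aux_conv_unique x B hBx ?_
  intro φ ψ p q hφ hψ hp hq
  obtain ⟨y1, χ1, hχ1, hy1⟩ := hsub φ
  obtain ⟨y2, χ2, hχ2, hy2⟩ := hsub ψ
  have s1 := S.limit_saddle hs (hφ.comp hχ1.tendsto_atTop) (hp.comp hχ1.tendsto_atTop) hy1
  have s2 := S.limit_saddle hs (hψ.comp hχ2.tendsto_atTop) (hq.comp hχ2.tendsto_atTop) hy2
  have s3 := saddle_swap s1 s2
  apply eq_of_inner hφ hψ hp hq
  obtain ⟨l1, hl1⟩ := (S.conv s1).1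
  obtain ⟨l2, hl2⟩ := (S.conv s3).1
  have hαlim := tendsto_atTop_ciInf S.haanti ⟨0, by rintro _ ⟨k, rfl⟩; exact (S.ha k).1.le⟩
  have hα2 := (tendsto_add_atTop_iff_nat 2).2 hαlim
  have hlim := (((tendsto_const_nhds (x := (2 : ℝ))).sub hα2).mul_const (‖p‖ ^ 2 - ‖q‖ ^ 2)).sub
    (hl1.sub hl2) |>.div_const 2
  have hPeq : ∀ z, auxP g K p y1 z = auxP g K q y1 z := by
    intro z
    have e1 := (s1 q y1).2
    have e2 := (s3 p y1).2
    unfold auxP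
    simp only [ContinuousLinearMap.adjoint_inner_left, map_sub, inner_sub_right]
    rw [real_inner_comm (K p), real_inner_comm (K q)]
    linarith
  have hω : ∀ j, ((2 - a (j + 2)) * (‖p‖ ^ 2 - ‖q‖ ^ 2) - (En g K a b β τs θs x xag y yag p y1 j -
      En g K a b β τs θs x xag y yag q y1 j)) / 2 =
      ⟪x (j + 1), p - q⟫ + (1 - a (j + 2)) * ⟪xag (j + 1), p - q⟫ := by
    intro j
    have e1 := sq_diff (x (j + 1)) p q
    have e2 := sq_diff (xag (j + 2)) p q
    have e3 : ⟪xag (j + 2), p - q⟫ = (1 - a (j + 2)) * ⟪xag (j + 1), p - q⟫ +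
        a (j + 2) * ⟪x (j + 1), p - q⟫ := by
      rw [S.hxag (j + 1), inner_add_left, real_inner_smul_left, real_inner_smul_left]
    rw [e3] at e2
    unfold En
    rw [hPeq]
    linear_combination (-(1 - a (j + 2)) / 2) * e1 - (1 / 2) * e2
  simp only [hω] at hlim
  refine aux_scalar_conv (fun j => ⟪x (j + 1), p - q⟫) (fun j => ⟪xag (j + 1), p - q⟫)
    (fun j => a (j + 1)) (fun k => S.ha _) (fun i j hij => S.haanti (by omega)) (fun j => ?_)
    (B * ‖p - q‖) (fun j => ?_) (fun _ => True) (fun M => ⟨M, le_rfl, trivial⟩)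
    (((2 - ⨅ i, a i) * (‖p‖ ^ 2 - ‖q‖ ^ 2) - (l1 - l2)) / 2) ?_
    (inner_conv_of x (S.t_dx hs))
  · show ⟪xag (j + 2), p - q⟫ = _
    rw [S.hxag (j + 1), inner_add_left, real_inner_smul_left, real_inner_smul_left]
  · exact (abs_real_inner_le_norm _ _).trans
      (mul_le_mul_of_nonneg_right (hBxag _) (norm_nonneg _))
  · intro ε hε
    obtain ⟨M, hM⟩ := Metric.tendsto_atTop.1 hlim ε hε
    exact ⟨M, fun m hm _ => by have := hM m hm; rw [Real.dist_eq] at this; exact this.le⟩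

theorem y_omega
    (S : AuxNP g h K a b β δ θ τs θs τlow x xag xmd xbar y yag ymd)
    {xs : X} {y1 y2 : Y} (s1 : IsSaddlePoint g h K xs y1)
    (s2 : IsSaddlePoint g h K xs y2) :
    ∃ L, Tendsto (fun j => (⟪y (j + 1), y1 - y2⟫ + (1 - b (j + 2)) * ⟪yag (j + 1), y1 - y2⟫)
      - β * ((τs j * (1 + θs j)) * (auxP g K xs y1 (x j) - auxP g K xs y2 (x j)))) atTop (𝓝 L) := by
  obtain ⟨l1, hl1⟩ := (S.conv s1).1
  obtain ⟨l2, hl2⟩ := (S.conv s2).1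
  have hαlim := tendsto_atTop_ciInf S.hbanti ⟨0, by rintro _ ⟨k, rfl⟩; exact (S.hb k).1.le⟩
  have hα2 := (tendsto_add_atTop_iff_nat 2).2 hαlim
  have hlim := (((tendsto_const_nhds (x := (2 : ℝ))).sub hα2).mul_const (‖y1‖ ^ 2 - ‖y2‖ ^ 2)).sub
    ((hl1.sub hl2).const_mul β) |>.div_const 2
  refine ⟨_, hlim.congr fun j => ?_⟩
  have e1 := sq_diff (y (j + 1)) y1 y2
  have e2 := sq_diff (yag (j + 2)) y1 y2
  have e3 : ⟪yag (j + 2), y1 - y2⟫ = (1 - b (j + 2)) * ⟪yag (j + 1), y1 - y2⟫ +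
      b (j + 2) * ⟪y (j + 1), y1 - y2⟫ := by
    rw [S.hyag j, inner_add_left, real_inner_smul_left, real_inner_smul_left]
  rw [e3] at e2
  have hβ : β * (1 / β) = 1 := by have := S.hβ.ne'; field_simp
  unfold En
  linear_combination (-(1 - b (j + 2)) / 2) * e1 - (1 / 2) * e2 -
    (1 / 2) * ((1 - b (j + 2)) * ‖y (j + 1) - y1‖ ^ 2 + ‖yag (j + 2) - y1‖ ^ 2
     - ((1 - b (j + 2)) * ‖y (j + 1) - y2‖ ^ 2 + ‖yag (j + 2) - y2‖ ^ 2)) * hβ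

theorem y_scalar
    (S : AuxNP g h K a b β δ θ τs θs τlow x xag xmd xbar y yag ymd)
    {xs : X} {y1 y2 : Y} (s1 : IsSaddlePoint g h K xs y1)
    (s2 : IsSaddlePoint g h K xs y2) (Good : ℕ → Prop) (hfreq : ∀ M, ∃ m, M ≤ m ∧ Good m)
    (hω : ∀ ε > 0, ∃ M, ∀ m, M ≤ m → Good m →
      |(τs m * (1 + θs m)) * (auxP g K xs y1 (x m) - auxP g K xs y2 (x m))| ≤ ε)
    (hp : ∀ ε > 0, ∃ M, ∀ m, M ≤ m → Good m → ∀ k, m ≤ k →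
      (∀ j, m < j → j < k → ¬ Good j) → |⟪y (k + 1), y1 - y2⟫ - ⟪y (m + 1), y1 - y2⟫| ≤ ε) :
    ∃ l, Tendsto (fun j => ⟪y (j + 1), y1 - y2⟫) atTop (𝓝 l) := by
  obtain ⟨B, hBx, hBxag, hBy, hByag⟩ := S.bounded s1
  obtain ⟨L, hL⟩ := S.y_omega s1 s2
  have hβ := S.hβ
  refine aux_scalar_conv (fun j => ⟪y (j + 1), y1 - y2⟫) (fun j => ⟪yag (j + 1), y1 - y2⟫)
    (fun j => b (j + 1)) (fun k => S.hb _) (fun i j hij => S.hbanti (by omega)) (fun j => ?_)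
    (B * ‖y1 - y2‖) (fun j => ?_) Good hfreq L ?_ hp
  · show ⟪yag (j + 2), y1 - y2⟫ = _
    rw [S.hyag j, inner_add_left, real_inner_smul_left, real_inner_smul_left]
  · exact (abs_real_inner_le_norm _ _).trans
      (mul_le_mul_of_nonneg_right (hByag _) (norm_nonneg _))
  · intro ε hε
    obtain ⟨M1, hM1⟩ := Metric.tendsto_atTop.1 hL (ε / 2) (by positivity)
    obtain ⟨M2, hM2⟩ := hω (ε / (2 * β)) (by positivity)
    refine ⟨max M1 M2, fun m hm hg => ?_⟩
    have h1 := hM1 m (le_trans (le_max_left _ _) hm)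
    have h2 := hM2 m (le_trans (le_max_right _ _) hm) hg
    rw [Real.dist_eq] at h1
    set W := (τs m * (1 + θs m)) * (auxP g K xs y1 (x m) - auxP g K xs y2 (x m))
    have h3 : |β * W| ≤ ε / 2 := by
      rw [abs_mul, abs_of_pos hβ]
      calc β * |W| ≤ β * (ε / (2 * β)) := mul_le_mul_of_nonneg_left h2 hβ.le
        _ = ε / 2 := by field_simp
    have h4 := abs_lt.1 h1
    have h5 := abs_le.1 h3
    show |⟪y (m + 1), y1 - y2⟫ + (1 - b (m + 2)) * ⟪yag (m + 1), y1 - y2⟫ - L| ≤ ε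
    rw [abs_le]
    constructor <;> linarith [h4.1, h4.2, h5.1, h5.2]

theorem claim0
    (S : AuxNP g h K a b β δ θ τs θs τlow x xag xmd xbar y yag ymd)
    {xs : X} {y1 y2 : Y} (s1 : IsSaddlePoint g h K xs y1)
    (s2 : IsSaddlePoint g h K xs y2) {φ ψ : ℕ → ℕ} (hφ : Tendsto φ atTop atTop)
    (hψ : Tendsto ψ atTop atTop) (hp : Tendsto (fun n => y (φ n)) atTop (𝓝 y1))
    (hq : Tendsto (fun n => y (ψ n)) atTop (𝓝 y2))
    (hK : (ContinuousLinearMap.adjoint K) (y1 - y2) = 0) : y1 = y2 := by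
  apply eq_of_inner hφ hψ hp hq
  refine S.y_scalar s1 s2 (fun _ => True) (fun M => ⟨M, le_rfl, trivial⟩) ?_
    (inner_conv_of y (S.t_dy s1))
  intro ε hε
  refine ⟨0, fun m _ _ => ?_⟩
  have : auxP g K xs y1 (x m) - auxP g K xs y2 (x m) = 0 := by
    unfold auxP
    rw [map_sub, sub_eq_zero] at hK
    rw [hK]; ring
  rw [this, mul_zero, abs_zero]; exact hε.le

theorem bad_step
    (S : AuxNP g h K a b β δ θ τs θs τlow x xag xmd xbar y yag ymd)
    (i : ℕ) (hbad : ¬ θs (i + 1) ^ 2 ≤ 1 / 2 + θs i) :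
    1 / τs i ≤ (2 * (1 / 2 + θ) ^ 2) *
      (1 / (τs i * (1 / 2 + θs i)) - 1 / (τs (i + 1) * (1 / 2 + θs (i + 1)))) := by
  have h1 := S.hτpos i
  have h2 := S.hθpos i
  have h3 := S.hτpos (i + 1)
  have h4 := S.hθpos (i + 1)
  have h5 := S.hτθ i
  have h6 := S.hθub i
  have h7 := S.hθub (i + 1)
  push Not at hbad
  set t := τs i
  set p := θs i
  set q := θs (i + 1)
  rw [h5] at h3 ⊢
  have hd : t * (1 / 2 + p) + q * t / 2 ≤ q * t * (1 / 2 + q) := by nlinarith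
  have e : 1 / (t * (1 / 2 + p)) - 1 / (q * t * (1 / 2 + q)) =
      (q * t * (1 / 2 + q) - t * (1 / 2 + p)) / ((t * (1 / 2 + p)) * (q * t * (1 / 2 + q))) := by
    field_simp
  rw [e, ← mul_div_assoc, div_le_div_iff₀ h1 (by positivity)]
  have h8 : (1 / 2 + p) * (1 / 2 + q) ≤ (1 / 2 + θ) ^ 2 := by nlinarith
  calc 1 * ((t * (1 / 2 + p)) * (q * t * (1 / 2 + q)))
      = ((1 / 2 + p) * (1 / 2 + q)) * (q * t * t) := by ring
    _ ≤ (1 / 2 + θ) ^ 2 * (q * t * t) := mul_le_mul_of_nonneg_right h8 (by positivity)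
    _ = 2 * (1 / 2 + θ) ^ 2 * (q * t / 2) * t := by ring
    _ ≤ _ := by
      refine mul_le_mul_of_nonneg_right (mul_le_mul_of_nonneg_left ?_ (by positivity)) h1.le
      linarith

theorem one_step
    (S : AuxNP g h K a b β δ θ τs θs τlow x xag xmd xbar y yag ymd)
    (η : ℝ) (j : ℕ) (hη : ‖y (j + 2) - y (j + 1)‖ ≤ η) :
    ‖(ContinuousLinearMap.adjoint K) (y (j + 2) - y (j + 1))‖ ≤
      (δ / Real.sqrt β * η) * (1 / τs (j + 1)) := by
  have h1 := S.hls j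
  have h2 := S.hτpos (j + 1)
  have h3 := Real.sqrt_pos.2 S.hβ
  have h4 : Real.sqrt β * τs (j + 1) *
      ‖(ContinuousLinearMap.adjoint K) (y (j + 2) - y (j + 1))‖ ≤ δ * η :=
    h1.trans (mul_le_mul_of_nonneg_left hη S.hδ.le)
  have e : (δ / Real.sqrt β * η) * (1 / τs (j + 1)) = δ * η / (Real.sqrt β * τs (j + 1)) := by
    field_simp
  rw [e, le_div_iff₀ (by positivity)]
  linarith

theorem stretch_bound
    (S : AuxNP g h K a b β δ θ τs θs τlow x xag xmd xbar y yag ymd)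
    (η : ℝ) (m : ℕ) (hη : ∀ j, m ≤ j → ‖y (j + 2) - y (j + 1)‖ ≤ η)
    (k : ℕ) (hk : m ≤ k) (hbad : ∀ i, m < i → i ≤ k → ¬ θs (i + 1) ^ 2 ≤ 1 / 2 + θs i) :
    ‖(ContinuousLinearMap.adjoint K) (y (k + 1) - y (m + 1))‖ ≤
      (δ / Real.sqrt β * η) * ((2 * (1 / 2 + θ) ^ 2) *
      (1 / (τs (m + 1) * (1 / 2 + θs (m + 1))) - 1 / (τs (k + 1) * (1 / 2 + θs (k + 1))))) := by
  have hη0 : 0 ≤ η := (norm_nonneg _).trans (hη m le_rfl)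
  have hδ := S.hδ
  induction k, hk using Nat.le_induction with
  | base => simp
  | succ k hk ih =>
    have h1 := ih fun i hi hik => hbad i hi (by omega)
    have h2 := S.one_step η k (hη k hk)
    have h3 := S.bad_step (k + 1) (hbad (k + 1) (by omega) le_rfl)
    have h4 := mul_le_mul_of_nonneg_left h3 (show 0 ≤ δ / Real.sqrt β * η by positivity)
    have e : y (k + 1 + 1) - y (m + 1) = (y (k + 2) - y (k + 1)) + (y (k + 1) - y (m + 1)) := by
      abel
    rw [e, map_add]
    refine (norm_add_le _ _).trans ?_
    linarith

theorem stretch_small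
    (S : AuxNP g h K a b β δ θ τs θs τlow x xag xmd xbar y yag ymd)
    {xh : X} {yh : Y} (hs : IsSaddlePoint g h K xh yh) :
    ∀ ε > 0, ∃ M, ∀ m, M ≤ m → ∀ k, m ≤ k →
      (∀ j, m < j → j < k → ¬ θs (j + 1) ^ 2 ≤ 1 / 2 + θs j) →
      ‖(ContinuousLinearMap.adjoint K) (y (k + 1) - y (m + 1))‖ ≤ ε := by
  intro ε hε
  have hδ := S.hδ
  have hβ := Real.sqrt_pos.2 S.hβ
  have hτl := S.hτlow
  set C0 := 2 * (1 / 2 + θ) ^ 2 with hC0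
  have hC : 0 ≤ C0 := by positivity
  have hη : 0 < ε * τlow * Real.sqrt β / (δ * (2 * C0 + 1)) := by positivity
  set η := ε * τlow * Real.sqrt β / (δ * (2 * C0 + 1)) with hηd
  obtain ⟨M, hM⟩ := eventually_atTop.1 ((S.t_dy hs).eventually_le_const hη)
  refine ⟨M, fun m hm k hk hbad => ?_⟩
  rcases Nat.eq_or_lt_of_le hk with rfl | hlt
  · simp [hε.le]
  obtain ⟨k', rfl⟩ := Nat.exists_eq_add_of_le' (show 1 ≤ k by omega)
  have h1 := S.stretch_bound η m (fun j hj => hM j (by omega)) k' (by omega)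
    (fun i hi hik => hbad i hi (by omega))
  rw [← hC0] at h1
  have h2 := S.one_step η k' (hM k' (by omega))
  have hc : 0 ≤ δ / Real.sqrt β * η := by positivity
  have h3 : 1 / τs (k' + 1) ≤ 1 / τlow := one_div_le_one_div_of_le hτl (S.hτlb _)
  have p1 := S.hτpos (k' + 1)
  have p2 := S.hθpos (k' + 1)
  have p3 := S.hτpos (m + 1)
  have p4 := S.hθpos (m + 1)
  have h4 : 0 ≤ 1 / (τs (k' + 1) * (1 / 2 + θs (k' + 1))) := by positivity
  have h5 : 1 / (τs (m + 1) * (1 / 2 + θs (m + 1))) ≤ 1 / (τlow * (1 / 2)) :=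
    one_div_le_one_div_of_le (by positivity)
      (mul_le_mul (S.hτlb _) (by linarith) (by norm_num) p3.le)
  have h6 : (δ / Real.sqrt β * η) * (C0 *
      (1 / (τs (m + 1) * (1 / 2 + θs (m + 1))) - 1 / (τs (k' + 1) * (1 / 2 + θs (k' + 1)))))
      ≤ (δ / Real.sqrt β * η) * (C0 * (1 / (τlow * (1 / 2)))) :=
    mul_le_mul_of_nonneg_left (mul_le_mul_of_nonneg_left (by linarith) hC) hc
  have h7 := mul_le_mul_of_nonneg_left h3 hc
  have e2 : (δ / Real.sqrt β * η) * (C0 * (1 / (τlow * (1 / 2)))) +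
      (δ / Real.sqrt β * η) * (1 / τlow) = ε := by
    rw [hηd]; field_simp
  have e : y (k' + 1 + 1) - y (m + 1) = (y (k' + 2) - y (k' + 1)) + (y (k' + 1) - y (m + 1)) := by
    abel
  rw [e, map_add]
  refine (norm_add_le _ _).trans ?_
  linarith

theorem stretch_y
    (S : AuxNP g h K a b β δ θ τs θs τlow x xag xmd xbar y yag ymd)
    {xs : X} {yh : Y} (hs : IsSaddlePoint g h K xs yh)
    (hx : Tendsto x atTop (𝓝 xs)) :
    ∀ ε > 0, ∃ M, ∀ m, M ≤ m → ∀ k, m ≤ k →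
      (∀ j, m < j → j < k → ¬ θs (j + 1) ^ 2 ≤ 1 / 2 + θs j) →
      ‖y (k + 1) - y (m + 1)‖ ≤ ε := by
  intro ε hε
  by_contra hcon
  push Not at hcon
  choose m hm k hk hbad hgt using hcon
  obtain ⟨B, hBx, hBxag, hBy, hByag⟩ := S.bounded hs
  have : ProperSpace Y := FiniteDimensional.proper_real Y
  have hsub : ∀ φ : ℕ → ℕ, ∃ q, ∃ χ : ℕ → ℕ, StrictMono χ ∧
      Tendsto (fun n => y (φ (χ n))) atTop (𝓝 q) := by
    intro φ
    obtain ⟨p, -, χ, h1, h2⟩ := (isCompact_closedBall (0 : Y) B).tendsto_subseq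
      (x := fun n => y (φ n)) (fun k => by simpa using hBy (φ k))
    exact ⟨p, χ, h1, h2⟩
  obtain ⟨y4, χ, hχ, hy4⟩ := hsub fun n => m n + 1
  obtain ⟨y3, χ', hχ', hy3⟩ := hsub fun n => k (χ n) + 1
  have hσ : Tendsto (fun n => χ (χ' n)) atTop atTop := hχ.tendsto_atTop.comp hχ'.tendsto_atTop
  have tm : Tendsto m atTop atTop := tendsto_atTop_mono hm tendsto_id
  have tk : Tendsto k atTop atTop := tendsto_atTop_mono hk tm
  have tm' : Tendsto (fun n => m (χ (χ' n)) + 1) atTop atTop :=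
    (tendsto_add_atTop_nat 1).comp (tm.comp hσ)
  have tk' : Tendsto (fun n => k (χ (χ' n)) + 1) atTop atTop :=
    (tendsto_add_atTop_nat 1).comp (tk.comp hσ)
  have hy4' : Tendsto (fun n => y (m (χ (χ' n)) + 1)) atTop (𝓝 y4) := hy4.comp hχ'.tendsto_atTop
  have s3 := S.limit_saddle hs tk' (hx.comp tk') hy3
  have s4 := S.limit_saddle hs tm' (hx.comp tm') hy4'
  have hdiff := hy3.sub hy4'
  have hK : (ContinuousLinearMap.adjoint K) (y3 - y4) = 0 := by
    have t1 := (((ContinuousLinearMap.adjoint K).continuous.tendsto _).comp hdiff).norm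
    have : ‖(ContinuousLinearMap.adjoint K) (y3 - y4)‖ ≤ 0 := by
      refine le_of_forall_pos_le_add fun ε' hε' => ?_
      rw [zero_add]
      obtain ⟨M, hM⟩ := S.stretch_small hs ε' hε'
      refine le_of_tendsto t1 ?_
      filter_upwards [(tm.comp hσ).eventually_ge_atTop M] with n hn
      exact hM _ hn _ (hk _) fun j h1 h2 => not_le.2 (hbad _ j h1 h2)
    exact norm_eq_zero.1 (le_antisymm this (norm_nonneg _))
  have e := S.claim0 s3 s4 tk' tm' hy3 hy4' hK
  have h1 : ε ≤ ‖y3 - y4‖ := ge_of_tendsto hdiff.norm (Eventually.of_forall fun n => (hgt _).le)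
  rw [e, sub_self, norm_zero] at h1
  linarith

theorem y_conv
    (S : AuxNP g h K a b β δ θ τs θs τlow x xag xmd xbar y yag ymd)
    {xs : X} {yh : Y} (hs : IsSaddlePoint g h K xs yh)
    (hx : Tendsto x atTop (𝓝 xs)) : ∃ p, Tendsto y atTop (𝓝 p) := by
  obtain ⟨B, hBx, hBxag, hBy, hByag⟩ := S.bounded hs
  refine aux_conv_unique y B hBy ?_
  intro φ ψ p q hφ hψ hp hq
  have s1 := S.limit_saddle hs hφ (hx.comp hφ) hp
  have s2 := S.limit_saddle hs hψ (hx.comp hψ) hq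
  by_cases hfreq : ∀ M, ∃ m, M ≤ m ∧ θs (m + 1) ^ 2 ≤ 1 / 2 + θs m
  · apply eq_of_inner hφ hψ hp hq
    refine S.y_scalar s1 s2 (fun m => θs (m + 1) ^ 2 ≤ 1 / 2 + θs m) hfreq ?_ ?_
    · intro ε hε
      have hR := ((S.conv s1).2.add (S.conv s2).2).const_mul (1 + θ)
      rw [add_zero, mul_zero] at hR
      obtain ⟨M, hM⟩ := eventually_atTop.1 (hR.eventually_le_const hε)
      refine ⟨M, fun m hm hg => le_trans ?_ (hM m hm)⟩
      have key : ∀ y1, IsSaddlePoint g h K xs y1 → τs m * auxP g K xs y1 (x m) ≤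
          Rs g K a b β δ θ τs θs x xag xbar y yag xs y1 m := by
        intro y1 sy
        obtain ⟨h1, h2, h3, h4, h5, h6⟩ := S.terms sy m
        have hP := auxP_nonneg sy (x m)
        have ht := S.hτpos m
        have h7 : τs m * (1 / 2) ≤ τs m * (1 + θs m - θs (m + 1) ^ 2) :=
          mul_le_mul_of_nonneg_left (by linarith) ht.le
        have h8 := mul_le_mul_of_nonneg_right h7 hP
        unfold Rs
        linarith
      have k1 := key p s1
      have k2 := key q s2
      have P1 := mul_nonneg (S.hτpos m).le (auxP_nonneg s1 (x m))
      have P2 := mul_nonneg (S.hτpos m).le (auxP_nonneg s2 (x m))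
      have t1 := S.hθpos m
      have t2 := S.hθub m
      have e : τs m * (1 + θs m) * (auxP g K xs p (x m) - auxP g K xs q (x m)) =
        (1 + θs m) * (τs m * auxP g K xs p (x m) - τs m * auxP g K xs q (x m)) := by ring
      rw [e, abs_mul, abs_of_pos (by linarith : 0 < 1 + θs m)]
      refine mul_le_mul (by linarith) ?_ (abs_nonneg _) (by linarith)
      rw [abs_le]
      constructor <;> linarith
    · intro ε hε
      obtain ⟨M, hM⟩ := S.stretch_y hs hx (ε / (‖p - q‖ + 1)) (by positivity)
      refine ⟨M, fun m hm _ k hk hbad => ?_⟩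
      have h1 := hM m hm k hk hbad
      rw [← inner_sub_left]
      refine (abs_real_inner_le_norm _ _).trans ?_
      rw [le_div_iff₀ (by positivity)] at h1
      refine le_trans (mul_le_mul_of_nonneg_left ?_ (norm_nonneg _)) h1
      linarith
  · push Not at hfreq
    obtain ⟨M0, hM0⟩ := hfreq
    have hb : ∀ j, M0 ≤ j → ¬ θs (j + 1) ^ 2 ≤ 1 / 2 + θs j := fun j hj => not_le.2 (hM0 j hj)
    have hc : CauchySeq (fun n => y (n + 1)) := by
      rw [Metric.cauchySeq_iff']
      intro ε hε
      obtain ⟨M, hM⟩ := S.stretch_y hs hx (ε / 2) (by positivity)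
      refine ⟨max M M0, fun n hn => ?_⟩
      rw [dist_eq_norm]
      have := hM (max M M0) (le_max_left _ _) n hn fun j hj _ =>
        hb j ((le_max_right M M0).trans hj.le)
      linarith
    have : CompleteSpace Y := FiniteDimensional.complete ℝ Y
    obtain ⟨l, hl⟩ := cauchySeq_tendsto_of_complete hc
    have hl' : Tendsto y atTop (𝓝 l) := (tendsto_add_atTop_iff_nat 1).1 hl
    rw [tendsto_nhds_unique hp (hl'.comp hφ), tendsto_nhds_unique hq (hl'.comp hψ)]

end
end AuxNP
end main
/-- **Theorem 3.5 (global convergence of NPDAL).** If the saddle problem admits a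
saddle point, then the NPDAL iterates `(x_k, y_k)` converge to a saddle point. -/
theorem npdal_global_convergence
    {X Y : Type*}
    [NormedAddCommGroup X] [InnerProductSpace ℝ X] [FiniteDimensional ℝ X]
    [NormedAddCommGroup Y] [InnerProductSpace ℝ Y] [FiniteDimensional ℝ Y]
    (g : X → ℝ) (h : Y → ℝ) (K : X →L[ℝ] Y)
    (hg : ConvexOn ℝ Set.univ g) (hgc : Continuous g)
    (hh : ConvexOn ℝ Set.univ h) (hhc : Continuous h)
    -- NPDAL parameters
    (a b : ℕ → ℝ) (ha : ∀ k, a k ∈ Set.Ioo (0 : ℝ) 1) (hb : ∀ k, b k ∈ Set.Ioo (0 : ℝ) 1)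
    (haanti : Antitone a) (hbanti : Antitone b)
    (β μ δ θ : ℝ) (hβ : 0 < β) (hμ : μ ∈ Set.Ioo (0 : ℝ) 1) (hδ : δ ∈ Set.Ioo (0 : ℝ) 1)
    (hθ : 0 < θ)
    (hconda : ∀ k, δ + θ ^ 2 * a k + a k < 1) (hcondb : ∀ k, δ + b k < 1)
    -- linesearch stepsizes and extrapolation parameters
    (τs θs : ℕ → ℝ) (hτpos : ∀ k, 0 < τs k) (hθ0 : θs 0 = 1)
    (hθs : ∀ k, θs (k + 1) = τs (k + 1) / τs k)
    (hτub : ∀ k, τs (k + 1) ≤ τs k * Real.sqrt (1 + θs k))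
    (hθub : ∀ k, θs k ≤ θ)
    (τlow : ℝ) (hτlow : 0 < τlow) (hτlb : ∀ k, τlow ≤ τs k)
    -- NPDAL iterates
    (x xag xmd xbar : ℕ → X) (y yag ymd : ℕ → Y)
    (hxag0 : xag 0 = x 0) (hyag1 : yag 1 = y 1)
    (hxag : ∀ k, xag (k + 1) = (1 - a (k + 1)) • xag k + a (k + 1) • x k)
    (hxmd : ∀ k, xmd (k + 1) = (1 - a (k + 1)) • x k + a (k + 1) • xag (k + 1))
    (hx : ∀ k, IsProx (τs k) g
      (xmd (k + 1) - τs k • (ContinuousLinearMap.adjoint K) (y (k + 1))) (x (k + 1)))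
    (hxbar : ∀ k, xbar (k + 1) = x (k + 1) + θs (k + 1) • (x (k + 1) - x k))
    (hyag : ∀ k, yag (k + 2) = (1 - b (k + 2)) • yag (k + 1) + b (k + 2) • y (k + 1))
    (hymd : ∀ k, ymd (k + 2) = (1 - b (k + 2)) • y (k + 1) + b (k + 2) • yag (k + 2))
    (hy : ∀ k, IsProx (β * τs (k + 1)) h
      (ymd (k + 2) + (β * τs (k + 1)) • K (xbar (k + 1))) (y (k + 2)))
    -- linesearch acceptance condition
    (hls : ∀ k, Real.sqrt β * τs (k + 1) *
        ‖(ContinuousLinearMap.adjoint K) (y (k + 2) - y (k + 1))‖ ≤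
      δ * ‖y (k + 2) - y (k + 1)‖)
    (hexists : ∃ xh : X, ∃ yh : Y, IsSaddlePoint g h K xh yh) :
    ∃ xs : X, ∃ ys : Y, IsSaddlePoint g h K xs ys ∧
      Filter.Tendsto x Filter.atTop (nhds xs) ∧
      Filter.Tendsto y Filter.atTop (nhds ys) := by
  obtain ⟨xh, yh, hs⟩ := hexists
  have hθpos : ∀ k, 0 < θs k := by
    intro k
    cases k with
    | zero => rw [hθ0]; exact one_pos
    | succ k => rw [hθs]; exact div_pos (hτpos _) (hτpos _)
  have S : AuxNP g h K a b β δ θ τs θs τlow x xag xmd xbar y yag ymd :=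
    { hgc := hgc, hhc := hhc, ha := ha, hb := hb, haanti := haanti, hbanti := hbanti, hβ := hβ
      hδ := hδ.1, hconda := hconda, hcondb := hcondb, hτpos := hτpos, hθpos := hθpos
      hτθ := fun k => by rw [hθs, div_mul_cancel₀ _ (hτpos k).ne']
      hτub := fun k => by
        have h1 : θs (k + 1) ≤ Real.sqrt (1 + θs k) := by
          rw [hθs, div_le_iff₀ (hτpos k)]; linarith [hτub k]
        have h2 := pow_le_pow_left₀ (hθpos (k + 1)).le h1 2
        rwa [Real.sq_sqrt (by linarith [hθpos k])] at h2
      hθub := hθub, hτlow := hτlow, hτlb := hτlb, hxag := hxag, hxmd := hxmd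
      hx := fun k u => aux_prox (hτpos k) hg (hx k) u
      hxbar := hxbar, hyag := hyag, hymd := hymd
      hy := fun k u => aux_prox (mul_pos hβ (hτpos _)) hh (hy k) u
      hls := hls }
  obtain ⟨xs, hxs⟩ := S.x_conv hs
  obtain ⟨B, hBx, hBxag, hBy, hByag⟩ := S.bounded hs
  have : ProperSpace Y := FiniteDimensional.proper_real Y
  obtain ⟨y0, -, χ, hχ, hy0⟩ := (isCompact_closedBall (0 : Y) B).tendsto_subseq
      (x := y) (fun k => by simpa using hBy k)
  have s0 := S.limit_saddle hs hχ.tendsto_atTop (hxs.comp hχ.tendsto_atTop) hy0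
  obtain ⟨ys, hys⟩ := S.y_conv s0 hxs
  exact ⟨xs, ys, S.limit_saddle hs Filter.tendsto_id hxs hys, hxs, hys⟩
end
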